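/- For each 1 < p < ∞ there exists a constant C_p > 0 such that for every integer k ≥ 1 and every polynomial P on ℝ^k, one has ‖∇P‖_{L^p(γ_k)} ≤ C_p · (deg P)^{1/2 + (1/π)·arctan(|p−2|/(2√(p−1)))} · ‖P‖_{L^p(γ_k)}. -/

import Mathlib

open MeasureTheory ProbabilityTheory Real

/-- The standard Gaussian measure on `ℝ^k`. -/
noncomputable def gaussMeasure (k : ℕ) : Measure (Fin k → ℝ) :=
  Measure.pi fun _ => gaussianReal 0 1

/-- The `L^p` norm with respect to the standard Gaussian measure on `ℝ^k`. -/
noncomputable def lpNormGauss {k : ℕ} (p : ℝ) (f : (Fin k → ℝ) → ℝ) : ℝ :=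
  (∫ x, |f x| ^ p ∂(gaussMeasure k)) ^ (1 / p)

/-- The Euclidean length of the gradient of a polynomial on `ℝ^k`. -/
noncomputable def gradNorm {k : ℕ} (P : MvPolynomial (Fin k) ℝ) (x : Fin k → ℝ) : ℝ :=
  Real.sqrt (∑ j, (MvPolynomial.eval x (MvPolynomial.pderiv j P)) ^ 2)

/-! ### The Ornstein–Uhlenbeck operator on polynomials -/

/-- The Ornstein–Uhlenbeck operator `Δ - x · ∇` acting on polynomials. -/
noncomputable def ouOp {k : ℕ} : MvPolynomial (Fin k) ℝ →ₗ[ℝ] MvPolynomial (Fin k) ℝ :=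
  ∑ j, ((MvPolynomial.pderiv j).toLinearMap ∘ₗ (MvPolynomial.pderiv j).toLinearMap -
    LinearMap.mulLeft ℝ (MvPolynomial.X j) ∘ₗ (MvPolynomial.pderiv j).toLinearMap)

lemma ouOp_apply {k : ℕ} (P : MvPolynomial (Fin k) ℝ) :
    ouOp P = ∑ j, (MvPolynomial.pderiv j (MvPolynomial.pderiv j P) -
      MvPolynomial.X j * MvPolynomial.pderiv j P) := by
  simp [ouOp, LinearMap.sum_apply]

lemma pderiv_comm {k : ℕ} (i j : Fin k) (P : MvPolynomial (Fin k) ℝ) :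
    MvPolynomial.pderiv i (MvPolynomial.pderiv j P) =
      MvPolynomial.pderiv j (MvPolynomial.pderiv i P) := by
  have h : ⁅MvPolynomial.pderiv (R := ℝ) i, MvPolynomial.pderiv (R := ℝ) j⁆ = 0 := by
    apply MvPolynomial.derivation_ext
    intro l
    simp only [Derivation.commutator_apply, MvPolynomial.pderiv_X, Pi.single_apply]
    split_ifs <;> simp
  have := congrArg (fun D => D P) h
  simpa [Derivation.commutator_apply, sub_eq_zero] using this

lemma ouOp_pderiv {k : ℕ} (i : Fin k) (P : MvPolynomial (Fin k) ℝ) :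
    ouOp (MvPolynomial.pderiv i P) =
      MvPolynomial.pderiv i (ouOp P) + MvPolynomial.pderiv i P := by
  simp only [ouOp_apply, map_sum, map_sub, Derivation.leibniz, MvPolynomial.pderiv_X,
    smul_eq_mul]
  rw [← sub_eq_iff_eq_add', ← Finset.sum_sub_distrib, Finset.sum_eq_single i]
  · simp
  · intro j _ hj
    simp [hj, pderiv_comm i j]
  · simp

lemma exists_eigen_decomposition_of_isHomogeneous {k : ℕ} (m : ℕ) :
    ∀ P : MvPolynomial (Fin k) ℝ, P.IsHomogeneous m →
      ∃ F : ℕ → MvPolynomial (Fin k) ℝ, (∀ n, ouOp (F n) = (-(n : ℝ)) • F n) ∧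
        (∀ n, m < n → F n = 0) ∧ P = ∑ n ∈ Finset.range (m + 1), F n := by
  induction m using Nat.strong_induction_on with
  | _ m ih =>
    intro P hP
    set D := ∑ j, MvPolynomial.pderiv j (MvPolynomial.pderiv j P) with hD
    have hL : ouOp P = D - (m : ℝ) • P := by
      rw [ouOp_apply, Finset.sum_sub_distrib, hP.sum_X_mul_pderiv, hD]
      simp [Nat.cast_smul_eq_nsmul]
    obtain ⟨G, hG, hG0, hDG⟩ : ∃ G : ℕ → MvPolynomial (Fin k) ℝ,
        (∀ n, ouOp (G n) = (-(n : ℝ)) • G n) ∧ (∀ n, m ≤ n → G n = 0) ∧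
          D = ∑ n ∈ Finset.range m, G n := by
      rcases Nat.eq_zero_or_pos m with rfl | hm
      · refine ⟨0, by simp, by simp, ?_⟩
        have : P = MvPolynomial.C (MvPolynomial.coeff 0 P) := by
          rw [← MvPolynomial.totalDegree_eq_zero_iff_eq_C]
          exact Nat.le_zero.1 hP.totalDegree_le
        rw [hD, this]; simp
      · have hDh : D.IsHomogeneous (m - 1 - 1) :=
          MvPolynomial.IsHomogeneous.sum _ _ _ fun j _ => hP.pderiv.pderiv
        obtain ⟨G, hG, hG0, hDG⟩ := ih (m - 1 - 1) (by omega) D hDh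
        refine ⟨G, hG, fun n hn => hG0 n (by omega), hDG.trans ?_⟩
        refine Finset.sum_subset (Finset.range_subset_range.2 (by omega)) fun n _ hn => hG0 n ?_
        simp only [Finset.mem_range] at hn; omega
    set S := ∑ n ∈ Finset.range m, ((m : ℝ) - n)⁻¹ • G n with hS
    have hSL : ouOp S + (m : ℝ) • S = D := by
      rw [hS, map_sum, Finset.smul_sum, ← Finset.sum_add_distrib, hDG]
      refine Finset.sum_congr rfl fun n hn => ?_
      have hne : (m : ℝ) - n ≠ 0 := by
        have : (n : ℝ) < m := by exact_mod_cast Finset.mem_range.1 hn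
        linarith
      rw [map_smul, hG, smul_smul, smul_smul, ← add_smul]
      rw [show ((m : ℝ) - n)⁻¹ * -(n : ℝ) + m * ((m : ℝ) - n)⁻¹ = 1 by field_simp; ring, one_smul]
    refine ⟨fun n => if n < m then ((m : ℝ) - n)⁻¹ • G n else if n = m then P - S else 0,
      fun n => ?_, fun n hn => ?_, ?_⟩
    · dsimp only
      split_ifs with h1 h2
      · rw [map_smul, hG, smul_comm]
      · subst h2
        rw [map_sub, hL, neg_smul, smul_sub, ← hSL]
        abel
      · simp
    · simp [show ¬ n < m by omega, show n ≠ m by omega]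
    · rw [Finset.sum_range_succ, Finset.sum_congr rfl fun n hn => if_pos (Finset.mem_range.1 hn)]
      simp [← hS]

/-- Every polynomial of degree at most `d` is a sum of eigenvectors of the Ornstein–Uhlenbeck
operator with eigenvalues `0, -1, …, -d`. -/
lemma exists_eigen_decomposition {k : ℕ} (P : MvPolynomial (Fin k) ℝ) :
    ∃ F : ℕ → MvPolynomial (Fin k) ℝ, (∀ n, ouOp (F n) = (-(n : ℝ)) • F n) ∧
      P = ∑ n ∈ Finset.range (P.totalDegree + 1), F n := by
  choose F hF hF0 hPF using fun m =>
    exists_eigen_decomposition_of_isHomogeneous m (MvPolynomial.homogeneousComponent m P)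
      (MvPolynomial.homogeneousComponent_isHomogeneous m P)
  refine ⟨fun n => ∑ m ∈ Finset.range (P.totalDegree + 1), F m n, fun n => ?_, ?_⟩
  · rw [map_sum, Finset.smul_sum]
    exact Finset.sum_congr rfl fun m _ => hF m n
  · rw [Finset.sum_comm]
    conv_lhs => rw [← MvPolynomial.sum_homogeneousComponent P]
    refine Finset.sum_congr rfl fun m hm => (hPF m).trans ?_
    refine Finset.sum_subset (Finset.range_subset_range.2 ?_) fun n _ hn => hF0 m n ?_
    · have := Finset.mem_range.1 hm; omega
    · simp only [Finset.mem_range] at hn; omega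

lemma hasDerivAt_eval_comp {k : ℕ} (P : MvPolynomial (Fin k) ℝ) {c : ℝ → Fin k → ℝ}
    {c' : Fin k → ℝ} {t : ℝ} (hc : ∀ j, HasDerivAt (fun s => c s j) (c' j) t) :
    HasDerivAt (fun s => MvPolynomial.eval (c s) P)
      (∑ j, MvPolynomial.eval (c t) (MvPolynomial.pderiv j P) * c' j) t := by
  induction P using MvPolynomial.induction_on with
  | C a => simpa using hasDerivAt_const t a
  | add p q hp hq =>
    simpa [add_mul, Finset.sum_add_distrib] using hp.fun_add hq
  | mul_X p i hp =>
    simp only [map_mul, MvPolynomial.eval_X]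
    refine (hp.fun_mul (hc i)).congr_deriv ?_
    symm
    simp only [Derivation.leibniz, smul_eq_mul, map_add, map_mul, MvPolynomial.eval_X,
      MvPolynomial.pderiv_X, add_mul, Finset.sum_add_distrib]
    rw [add_comm]
    congr 1
    · rw [Finset.sum_mul]
      exact Finset.sum_congr rfl fun j _ => by ring
    · rw [Finset.sum_eq_single i]
      · simp
      · intro j _ hj
        simp [hj.symm]
      · simp

lemma hasDerivAt_eval_update {k : ℕ} (P : MvPolynomial (Fin k) ℝ) (x : Fin k → ℝ) (j : Fin k) :
    HasDerivAt (fun s => MvPolynomial.eval (Function.update x j s) P)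
      (MvPolynomial.eval x (MvPolynomial.pderiv j P)) (x j) := by
  have := hasDerivAt_eval_comp P (c := Function.update x j) (c' := Pi.single j 1) (t := x j)
    fun i => by
      rcases eq_or_ne i j with rfl | h
      · simpa using hasDerivAt_id' (x i)
      · simpa [h] using hasDerivAt_const (x j) (x i)
  simpa [Pi.single_apply] using this

/-! ### Functions of exponential growth and Gaussian integration by parts -/

instance isProbabilityMeasure_gaussMeasure (k : ℕ) : IsProbabilityMeasure (gaussMeasure k) := by
  unfold gaussMeasure; infer_instance

/-- A function on `ℝ^k` is bounded by an exponential of the `ℓ¹` norm. -/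
def ExpBdd {k : ℕ} (f : (Fin k → ℝ) → ℝ) : Prop :=
  ∃ C m : ℝ, 0 ≤ C ∧ 0 ≤ m ∧ ∀ x, |f x| ≤ C * exp (m * ∑ i, |x i|)

namespace ExpBdd

variable {k : ℕ} {f g : (Fin k → ℝ) → ℝ}

lemma mono (hg : ExpBdd g) (h : ∀ x, |f x| ≤ |g x|) : ExpBdd f := by
  obtain ⟨C, m, hC, hm, H⟩ := hg
  exact ⟨C, m, hC, hm, fun x => (h x).trans (H x)⟩

lemma const (c : ℝ) : ExpBdd (fun _ : Fin k → ℝ => c) :=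
  ⟨|c|, 0, abs_nonneg c, le_rfl, fun x => by simp⟩

lemma coord (j : Fin k) : ExpBdd (fun x : Fin k → ℝ => x j) := by
  refine ⟨1, 1, zero_le_one, zero_le_one, fun x => ?_⟩
  have h1 : |x j| ≤ ∑ i, |x i| :=
    Finset.single_le_sum (f := fun i => |x i|) (fun i _ => abs_nonneg _) (Finset.mem_univ j)
  have h2 := Real.add_one_le_exp (∑ i, |x i|)
  rw [one_mul, one_mul]; linarith

lemma mul (hf : ExpBdd f) (hg : ExpBdd g) : ExpBdd (fun x => f x * g x) := by
  obtain ⟨C, m, hC, hm, H⟩ := hf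
  obtain ⟨D, n, hD, hn, K⟩ := hg
  refine ⟨C * D, m + n, by positivity, by positivity, fun x => ?_⟩
  rw [abs_mul, add_mul, exp_add]
  calc |f x| * |g x| ≤ (C * exp (m * ∑ i, |x i|)) * (D * exp (n * ∑ i, |x i|)) :=
        mul_le_mul (H x) (K x) (abs_nonneg _) (by positivity)
    _ = _ := by ring

lemma add (hf : ExpBdd f) (hg : ExpBdd g) : ExpBdd (fun x => f x + g x) := by
  obtain ⟨C, m, hC, hm, H⟩ := hf
  obtain ⟨D, n, hD, hn, K⟩ := hg
  refine ⟨C + D, m + n, by positivity, by positivity, fun x => ?_⟩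
  have hs : 0 ≤ ∑ i, |x i| := Finset.sum_nonneg fun i _ => abs_nonneg _
  have h1 : exp (m * ∑ i, |x i|) ≤ exp ((m + n) * ∑ i, |x i|) := by
    gcongr; linarith
  have h2 : exp (n * ∑ i, |x i|) ≤ exp ((m + n) * ∑ i, |x i|) := by
    gcongr; linarith
  calc |f x + g x| ≤ |f x| + |g x| := abs_add_le _ _
    _ ≤ C * exp ((m + n) * ∑ i, |x i|) + D * exp ((m + n) * ∑ i, |x i|) :=
        add_le_add ((H x).trans (by gcongr)) ((K x).trans (by gcongr))
    _ = _ := by ring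

lemma sum {ι : Type*} (s : Finset ι) {F : ι → (Fin k → ℝ) → ℝ} (h : ∀ i ∈ s, ExpBdd (F i)) :
    ExpBdd (fun x => ∑ i ∈ s, F i x) := by
  classical
  induction s using Finset.induction_on with
  | empty => simpa using const 0
  | insert a s ha ih =>
    simp only [Finset.sum_insert ha]
    exact (h a (Finset.mem_insert_self a s)).add
      (ih fun i hi => h i (Finset.mem_insert_of_mem hi))

lemma abs_rpow (hf : ExpBdd f) {s : ℝ} (hs : 0 ≤ s) : ExpBdd (fun x => |f x| ^ s) := by
  obtain ⟨C, m, hC, hm, H⟩ := hf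
  refine ⟨C ^ s, m * s, by positivity, by positivity, fun x => ?_⟩
  rw [abs_of_nonneg (rpow_nonneg (abs_nonneg _) _)]
  refine (rpow_le_rpow (abs_nonneg _) (H x) hs).trans_eq ?_
  rw [mul_rpow hC (exp_pos _).le, ← exp_mul]
  ring_nf

lemma eval (P : MvPolynomial (Fin k) ℝ) : ExpBdd (fun x => MvPolynomial.eval x P) := by
  induction P using MvPolynomial.induction_on with
  | C a => simpa using const a
  | add p q hp hq => simpa using hp.add hq
  | mul_X p i hp => simpa using hp.mul (coord i)

lemma exists_uniform_affine_bound (hf : ExpBdd f) (x : Fin k → ℝ) :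
    ∃ B : (Fin k → ℝ) → ℝ, Continuous B ∧ ExpBdd B ∧
      ∀ a b : ℝ, |a| ≤ 1 → |b| ≤ 1 → ∀ y, |f (a • x + b • y)| ≤ B y := by
  obtain ⟨C, m, hC, hm, H⟩ := hf
  refine ⟨fun y => C * exp (m * ∑ i, |x i|) * exp (m * ∑ i, |y i|), by fun_prop,
    ⟨C * exp (m * ∑ i, |x i|), m, by positivity, hm, fun y => ?_⟩, fun a b ha hb y => ?_⟩
  · rw [abs_of_nonneg (by positivity)]
  · refine (H _).trans ?_
    beta_reduce
    rw [mul_assoc, ← exp_add, ← mul_add, ← Finset.sum_add_distrib]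
    gcongr with i
    calc |(a • x + b • y) i| ≤ |a * x i| + |b * y i| := by
          simpa using abs_add_le (a * x i) (b * y i)
      _ ≤ |x i| + |y i| := by
          rw [abs_mul, abs_mul]
          exact add_le_add (mul_le_of_le_one_left (abs_nonneg _) ha)
            (mul_le_of_le_one_left (abs_nonneg _) hb)

lemma comp_affine (hf : ExpBdd f) (x : Fin k → ℝ) {a b : ℝ} (ha : |a| ≤ 1) (hb : |b| ≤ 1) :
    ExpBdd (fun y => f (a • x + b • y)) := by
  obtain ⟨B, -, hB, h⟩ := hf.exists_uniform_affine_bound x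
  exact hB.mono fun y => (h a b ha hb y).trans (le_abs_self _)

lemma integrable_exp_sum_abs (m : ℝ) :
    Integrable (fun x : Fin k → ℝ => exp (m * ∑ i, |x i|)) (gaussMeasure k) := by
  have h : Integrable (fun t : ℝ => exp (m * |t|)) (gaussianReal 0 1) := by
    refine ((integrable_exp_mul_gaussianReal m).add
      (integrable_exp_mul_gaussianReal (-m))).mono' (by fun_prop) (ae_of_all _ fun t => ?_)
    rw [norm_of_nonneg (exp_pos _).le]
    rcases abs_cases t with ⟨ht, _⟩ | ⟨ht, _⟩ <;> rw [ht] <;> simp [(exp_pos _).le]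
  have := Integrable.fintype_prod (ι := Fin k) (μ := fun _ => gaussianReal 0 1)
    (f := fun _ t => exp (m * |t|)) fun _ => h
  simpa [Finset.mul_sum, exp_sum, gaussMeasure] using this

lemma integrable (hf : ExpBdd f) (hc : Continuous f) : Integrable f (gaussMeasure k) := by
  obtain ⟨C, m, hC, hm, H⟩ := hf
  exact ((integrable_exp_sum_abs m).const_mul C).mono' hc.aestronglyMeasurable
    (ae_of_all _ fun x => H x)

lemma memLp (hf : ExpBdd f) (hc : Continuous f) {p : ℝ} (hp : 0 < p) :
    MemLp f (ENNReal.ofReal p) (gaussMeasure k) := by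
  rw [← integrable_norm_rpow_iff hc.aestronglyMeasurable (by simpa using hp) (by simp),
    ENNReal.toReal_ofReal hp.le]
  exact (hf.abs_rpow hp.le).integrable (hc.abs.rpow_const fun _ => Or.inr hp.le)

end ExpBdd

lemma continuous_eval_poly {k : ℕ} (P : MvPolynomial (Fin k) ℝ) :
    Continuous fun x => MvPolynomial.eval x P :=
  MvPolynomial.continuous_eval P

lemma integral_deriv_gaussianReal {g g' : ℝ → ℝ} (hg : ∀ x, HasDerivAt g (g' x) x)
    (hi : Integrable g (gaussianReal 0 1)) (hi' : Integrable g' (gaussianReal 0 1))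
    (hx : Integrable (fun x => x * g x) (gaussianReal 0 1)) :
    ∫ x, g' x ∂(gaussianReal 0 1) = ∫ x, x * g x ∂(gaussianReal 0 1) := by
  have key : ∀ f : ℝ → ℝ, Integrable f (gaussianReal 0 1) →
      Integrable (fun x => f x * gaussianPDFReal 0 1 x) := by
    intro f hf
    rw [gaussianReal_of_var_ne_zero _ one_ne_zero,
      integrable_withDensity_iff_integrable_smul' (measurable_gaussianPDF _ _)
        (ae_of_all _ fun _ => gaussianPDF_lt_top)] at hf
    simpa [mul_comm] using hf
  have hpdf : ∀ x, HasDerivAt (gaussianPDFReal 0 1) (-x * gaussianPDFReal 0 1 x) x := by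
    intro x
    have h1 : HasDerivAt (fun y : ℝ => -(y - 0) ^ 2 / (2 * ((1 : NNReal) : ℝ))) (-x) x := by
      have := (((hasDerivAt_id' x).sub_const 0).pow 2).neg.div_const (2 * ((1 : NNReal) : ℝ))
      refine this.congr_deriv ?_
      simp
      ring
    rw [gaussianPDFReal_def]
    refine (h1.exp.const_mul _).congr_deriv ?_
    ring
  have := integral_mul_deriv_eq_deriv_mul_of_integrable (u := g) (u' := g')
    (v := gaussianPDFReal 0 1) (v' := fun x => -x * gaussianPDFReal 0 1 x)
    (fun x _ => hg x) (fun x _ => hpdf x)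
    (by
      refine (key _ hx).neg.congr (ae_of_all _ fun x => ?_)
      simp; ring)
    (key _ hi') (key _ hi)
  rw [integral_gaussianReal_eq_integral_smul one_ne_zero,
    integral_gaussianReal_eq_integral_smul one_ne_zero]
  have h2 : ∫ x, g x * (-x * gaussianPDFReal 0 1 x) =
      - ∫ x, gaussianPDFReal 0 1 x • (x * g x) := by
    rw [← integral_neg]
    refine integral_congr_ae (ae_of_all _ fun x => ?_)
    simp; ring
  rw [h2, neg_inj] at this
  rw [this]
  exact integral_congr_ae (ae_of_all _ fun x => by simp [mul_comm])

/-- Gaussian integration by parts. -/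
lemma integral_partialDeriv_gauss {k : ℕ} (j : Fin k) {g g' : (Fin k → ℝ) → ℝ}
    (hg : ∀ x, HasDerivAt (fun s => g (Function.update x j s)) (g' x) (x j))
    (hc : Continuous g) (hc' : Continuous g') (hb : ExpBdd g) (hb' : ExpBdd g') :
    ∫ x, g' x ∂(gaussMeasure k) = ∫ x, x j * g x ∂(gaussMeasure k) := by
  obtain ⟨n, rfl⟩ : ∃ n, k = n + 1 := ⟨k - 1, by have := j.pos; omega⟩
  have mp := (measurePreserving_piFinSuccAbove (fun _ : Fin (n + 1) => gaussianReal 0 1) j).symm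
  have hI : ∀ f : (Fin (n + 1) → ℝ) → ℝ, Integrable f (gaussMeasure (n + 1)) →
      Integrable (fun z : ℝ × (Fin n → ℝ) => f (j.insertNth z.1 z.2))
        ((gaussianReal 0 1).prod (Measure.pi fun _ => gaussianReal 0 1)) := by
    intro f hf
    exact (mp.integrable_comp_emb (MeasurableEquiv.measurableEmbedding _)).2 hf
  have hE : ∀ f : (Fin (n + 1) → ℝ) → ℝ, Integrable f (gaussMeasure (n + 1)) →
      ∫ x, f x ∂(gaussMeasure (n + 1)) = ∫ y, ∫ s, f (j.insertNth s y) ∂(gaussianReal 0 1)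
        ∂(Measure.pi fun _ : Fin n => gaussianReal 0 1) := by
    intro f hf
    rw [← integral_prod_symm _ (hI f hf)]
    exact (mp.integral_comp' f).symm
  have i0 := hb.integrable hc
  have i1 := hb'.integrable hc'
  have i2 := ((ExpBdd.coord j).mul hb).integrable ((continuous_apply j).mul hc)
  rw [hE _ i1, hE _ i2]
  refine integral_congr_ae ?_
  filter_upwards [(hI _ i0).prod_left_ae, (hI _ i1).prod_left_ae, (hI _ i2).prod_left_ae]
    with y h0 h1 h2
  simp only [Fin.insertNth_apply_same] at h2 ⊢
  refine integral_deriv_gaussianReal (fun s => ?_) h0 h1 h2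
  simpa using hg (j.insertNth s y)

/-- The Ornstein–Uhlenbeck operator is associated with the Gaussian Dirichlet form. -/
lemma integral_mul_ouOp {k : ℕ} (Q : MvPolynomial (Fin k) ℝ) {G : (Fin k → ℝ) → ℝ}
    {G' : Fin k → (Fin k → ℝ) → ℝ}
    (hG : ∀ j x, HasDerivAt (fun s => G (Function.update x j s)) (G' j x) (x j))
    (hc : Continuous G) (hc' : ∀ j, Continuous (G' j)) (hb : ExpBdd G)
    (hb' : ∀ j, ExpBdd (G' j)) :
    ∫ x, G x * MvPolynomial.eval x (ouOp Q) ∂(gaussMeasure k) =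
      - ∫ x, ∑ j, G' j x * MvPolynomial.eval x (MvPolynomial.pderiv j Q) ∂(gaussMeasure k) := by
  have b1 : ∀ j, ExpBdd fun x => G' j x * MvPolynomial.eval x (MvPolynomial.pderiv j Q) :=
    fun j => (hb' j).mul (ExpBdd.eval _)
  have c1 : ∀ j, Continuous fun x => G' j x * MvPolynomial.eval x (MvPolynomial.pderiv j Q) :=
    fun j => (hc' j).mul (continuous_eval_poly _)
  have b2 : ∀ j, ExpBdd fun x =>
      G x * MvPolynomial.eval x (MvPolynomial.pderiv j (MvPolynomial.pderiv j Q)) :=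
    fun j => hb.mul (ExpBdd.eval _)
  have c2 : ∀ j, Continuous fun x =>
      G x * MvPolynomial.eval x (MvPolynomial.pderiv j (MvPolynomial.pderiv j Q)) :=
    fun j => hc.mul (continuous_eval_poly _)
  have b3 : ∀ j, ExpBdd fun x => G x * MvPolynomial.eval x (MvPolynomial.pderiv j Q) :=
    fun j => hb.mul (ExpBdd.eval _)
  have c3 : ∀ j, Continuous fun x => G x * MvPolynomial.eval x (MvPolynomial.pderiv j Q) :=
    fun j => hc.mul (continuous_eval_poly _)
  have b4 := fun j => (ExpBdd.coord j).mul (b3 j)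
  have c4 := fun j => (continuous_apply j).mul (c3 j)
  have key : ∀ j, ∫ x, x j * (G x * MvPolynomial.eval x (MvPolynomial.pderiv j Q))
        ∂(gaussMeasure k) =
      ∫ x, G' j x * MvPolynomial.eval x (MvPolynomial.pderiv j Q) ∂(gaussMeasure k) +
      ∫ x, G x * MvPolynomial.eval x (MvPolynomial.pderiv j (MvPolynomial.pderiv j Q))
        ∂(gaussMeasure k) := by
    intro j
    rw [← integral_add ((b1 j).integrable (c1 j)) ((b2 j).integrable (c2 j))]
    refine (integral_partialDeriv_gauss j (fun x => ?_) (c3 j) ((c1 j).add (c2 j)) (b3 j)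
      ((b1 j).add (b2 j))).symm
    simpa using (hG j x).fun_mul (hasDerivAt_eval_update (MvPolynomial.pderiv j Q) x j)
  have hx : ∀ x, G x * MvPolynomial.eval x (ouOp Q) =
      ∑ j, (G x * MvPolynomial.eval x (MvPolynomial.pderiv j (MvPolynomial.pderiv j Q)) -
        x j * (G x * MvPolynomial.eval x (MvPolynomial.pderiv j Q))) := by
    intro x
    rw [ouOp_apply]
    simp only [map_sum, map_sub, map_mul, MvPolynomial.eval_X, Finset.mul_sum]
    exact Finset.sum_congr rfl fun j _ => by ring
  have i5 : ∀ j, Integrable (fun x =>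
      G x * MvPolynomial.eval x (MvPolynomial.pderiv j (MvPolynomial.pderiv j Q)) -
        x j * (G x * MvPolynomial.eval x (MvPolynomial.pderiv j Q))) (gaussMeasure k) :=
    fun j => ((b2 j).integrable (c2 j)).sub ((b4 j).integrable (c4 j))
  simp_rw [hx]
  rw [integral_finsetSum _ fun j _ => i5 j,
    integral_finsetSum _ fun j _ => (b1 j).integrable (c1 j), ← Finset.sum_neg_distrib]
  refine Finset.sum_congr rfl fun j _ => ?_
  rw [integral_sub ((b2 j).integrable (c2 j)) ((b4 j).integrable (c4 j)), key j]
  ring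

/-! ### Contractivity of the complex-time Ornstein–Uhlenbeck semigroup -/

lemma rpow_le_rpow_add_rpow {a x b s : ℝ} (ha : 0 < a) (hax : a ≤ x) (hxb : x ≤ b) :
    x ^ s ≤ a ^ s + b ^ s := by
  have hx : 0 < x := ha.trans_le hax
  rcases le_or_gt 0 s with hs | hs
  · have := rpow_le_rpow hx.le hxb hs
    have := rpow_nonneg ha.le s
    linarith
  · have := rpow_le_rpow_of_nonpos ha hax hs.le
    have := rpow_nonneg (hx.le.trans hxb) s
    linarith

lemma ExpBdd.rpow_of_le {k : ℕ} {f : (Fin k → ℝ) → ℝ} (hf : ExpBdd f) {ε : ℝ} (hε : 0 < ε)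
    (h : ∀ x, ε ≤ f x) (s : ℝ) : ExpBdd (fun x => f x ^ s) := by
  rcases le_or_gt 0 s with hs | hs
  · refine (hf.abs_rpow hs).mono fun x => ?_
    rw [abs_of_nonneg (hε.le.trans (h x))]
  · refine (ExpBdd.const (ε ^ s)).mono fun x => ?_
    rw [abs_of_nonneg (rpow_nonneg (hε.le.trans (h x)) _), abs_of_nonneg (rpow_nonneg hε.le _)]
    exact rpow_le_rpow_of_nonpos hε (h x) hs.le

lemma dissipation_pointwise {p a b A B S σ τ : ℝ} (hσ : 0 ≤ σ)
    (hστ : (p - 2) ^ 2 * τ ^ 2 ≤ 4 * (p - 1) * σ ^ 2) (hS : a ^ 2 + b ^ 2 ≤ S) :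
    0 ≤ S * (σ * (A ^ 2 + B ^ 2)) +
      (p - 2) * (a * A + b * B) * (σ * (a * A + b * B) + τ * (b * A - a * B)) := by
  set X := a * A + b * B
  set Y := b * A - a * B
  have h1 : X ^ 2 + Y ^ 2 ≤ S * (A ^ 2 + B ^ 2) := by
    have : X ^ 2 + Y ^ 2 = (a ^ 2 + b ^ 2) * (A ^ 2 + B ^ 2) := by simp only [X, Y]; ring
    rw [this]; gcongr
  have h2 : 0 ≤ (p - 1) * σ * X ^ 2 + σ * Y ^ 2 + (p - 2) * τ * (X * Y) := by
    rcases hσ.eq_or_lt with rfl | hσ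
    · have : (p - 2) * τ = 0 := by
        have : ((p - 2) * τ) ^ 2 ≤ 0 := by nlinarith
        exact pow_eq_zero_iff (two_ne_zero) |>.1 (le_antisymm this (sq_nonneg _))
      rw [this]; simp
    · have h3 : 0 ≤ 4 * σ * ((p - 1) * σ * X ^ 2 + σ * Y ^ 2 + (p - 2) * τ * (X * Y)) := by
        have e : 4 * σ * ((p - 1) * σ * X ^ 2 + σ * Y ^ 2 + (p - 2) * τ * (X * Y)) =
          (4 * (p - 1) * σ ^ 2 - (p - 2) ^ 2 * τ ^ 2) * X ^ 2 +
            (2 * σ * Y + (p - 2) * τ * X) ^ 2 := by ring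
        rw [e]
        have : 0 ≤ 4 * (p - 1) * σ ^ 2 - (p - 2) ^ 2 * τ ^ 2 := by linarith
        positivity
      exact nonneg_of_mul_nonneg_right h3 (by positivity)
  nlinarith [mul_le_mul_of_nonneg_left h1 hσ]

lemma integral_dissipation_nonpos {k : ℕ} {p σ τ ε : ℝ} (hσ : 0 ≤ σ)
    (hστ : (p - 2) ^ 2 * τ ^ 2 ≤ 4 * (p - 1) * σ ^ 2) (hε : 0 < ε)
    (a b : MvPolynomial (Fin k) ℝ) :
    ∫ x, (MvPolynomial.eval x a ^ 2 + MvPolynomial.eval x b ^ 2 + ε) ^ (p / 2 - 1) *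
      (MvPolynomial.eval x a *
          (σ * MvPolynomial.eval x (ouOp a) - τ * MvPolynomial.eval x (ouOp b)) +
        MvPolynomial.eval x b *
          (σ * MvPolynomial.eval x (ouOp b) + τ * MvPolynomial.eval x (ouOp a)))
      ∂(gaussMeasure k) ≤ 0 := by
  set S : (Fin k → ℝ) → ℝ :=
    fun x => MvPolynomial.eval x a ^ 2 + MvPolynomial.eval x b ^ 2 + ε with hSdef
  have hSε : ∀ x, ε ≤ S x := fun x => le_add_of_nonneg_left (by positivity)
  have hSpos : ∀ x, 0 < S x := fun x => hε.trans_le (hSε x)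
  have hSc : Continuous S := by
    have := continuous_eval_poly a
    have := continuous_eval_poly b
    fun_prop
  have hSb : ExpBdd S := by
    simp only [hSdef, sq]
    exact (((ExpBdd.eval a).mul (ExpBdd.eval a)).add
      ((ExpBdd.eval b).mul (ExpBdd.eval b))).add (ExpBdd.const ε)
  have hVc : ∀ s : ℝ, Continuous fun x => S x ^ s := fun s =>
    hSc.rpow_const fun x => Or.inl (hSpos x).ne'
  have hVb : ∀ s : ℝ, ExpBdd fun x => S x ^ s := fun s => hSb.rpow_of_le hε hSε s
  let D : Fin k → MvPolynomial (Fin k) ℝ := fun j =>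
    a * MvPolynomial.pderiv j a + b * MvPolynomial.pderiv j b
  have hVd : ∀ j x, HasDerivAt (fun s => S (Function.update x j s) ^ (p / 2 - 1))
      ((p - 2) * S x ^ (p / 2 - 2) * MvPolynomial.eval x (D j)) (x j) := by
    intro j x
    have h1 : HasDerivAt (fun s => S (Function.update x j s))
        (2 * MvPolynomial.eval x (D j)) (x j) := by
      have := (((hasDerivAt_eval_update a x j).fun_pow 2).fun_add
        ((hasDerivAt_eval_update b x j).fun_pow 2)).add_const ε
      refine this.congr_deriv ?_
      simp [D]; ring
    refine (h1.rpow_const (Or.inl ?_)).congr_deriv ?_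
    · simpa using (hSpos x).ne'
    · simp only [Function.update_eq_self]
      rw [show p / 2 - 1 - 1 = p / 2 - 2 by ring]; ring
  have hG : ∀ (c : MvPolynomial (Fin k) ℝ) (j : Fin k) (x : Fin k → ℝ), HasDerivAt
      (fun s => S (Function.update x j s) ^ (p / 2 - 1) *
        MvPolynomial.eval (Function.update x j s) c)
      ((p - 2) * S x ^ (p / 2 - 2) * MvPolynomial.eval x (D j) * MvPolynomial.eval x c +
        S x ^ (p / 2 - 1) * MvPolynomial.eval x (MvPolynomial.pderiv j c)) (x j) := by
    intro c j x
    simpa using (hVd j x).fun_mul (hasDerivAt_eval_update c x j)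
  have ibp : ∀ c Q : MvPolynomial (Fin k) ℝ, _ := fun c Q =>
    integral_mul_ouOp Q (G := fun x => S x ^ (p / 2 - 1) * MvPolynomial.eval x c) (hG c)
      ((hVc _).mul (continuous_eval_poly c))
      (fun j => (((continuous_const.mul (hVc _)).mul (continuous_eval_poly _)).mul
        (continuous_eval_poly _)).add ((hVc _).mul (continuous_eval_poly _)))
      ((hVb _).mul (ExpBdd.eval c))
      (fun j => ((((ExpBdd.const _).mul (hVb _)).mul (ExpBdd.eval _)).mul (ExpBdd.eval _)).add
        ((hVb _).mul (ExpBdd.eval _)))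
  have i1 : ∀ c Q : MvPolynomial (Fin k) ℝ, Integrable (fun x =>
      S x ^ (p / 2 - 1) * MvPolynomial.eval x c * MvPolynomial.eval x Q) (gaussMeasure k) :=
    fun c Q => (((hVb _).mul (ExpBdd.eval _)).mul (ExpBdd.eval _)).integrable
      (((hVc _).mul (continuous_eval_poly _)).mul (continuous_eval_poly _))
  have i2 : ∀ c Q : MvPolynomial (Fin k) ℝ, Integrable (fun x => ∑ j,
      ((p - 2) * S x ^ (p / 2 - 2) * MvPolynomial.eval x (D j) * MvPolynomial.eval x c +
        S x ^ (p / 2 - 1) * MvPolynomial.eval x (MvPolynomial.pderiv j c)) *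
        MvPolynomial.eval x (MvPolynomial.pderiv j Q)) (gaussMeasure k) :=
    fun c Q => integrable_finsetSum _ fun j _ =>
      (((((((ExpBdd.const _).mul (hVb _)).mul (ExpBdd.eval _)).mul (ExpBdd.eval _)).add
        ((hVb _).mul (ExpBdd.eval _)))).mul (ExpBdd.eval _)).integrable
      (((((continuous_const.mul (hVc _)).mul (continuous_eval_poly _)).mul
        (continuous_eval_poly _)).add ((hVc _).mul (continuous_eval_poly _))).mul
        (continuous_eval_poly _))
  have e1 : ∀ x, S x ^ (p / 2 - 1) * (MvPolynomial.eval x a *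
          (σ * MvPolynomial.eval x (ouOp a) - τ * MvPolynomial.eval x (ouOp b)) +
        MvPolynomial.eval x b *
          (σ * MvPolynomial.eval x (ouOp b) + τ * MvPolynomial.eval x (ouOp a))) =
      S x ^ (p / 2 - 1) * MvPolynomial.eval x (σ • a + τ • b) * MvPolynomial.eval x (ouOp a) +
      S x ^ (p / 2 - 1) * MvPolynomial.eval x (σ • b - τ • a) *
        MvPolynomial.eval x (ouOp b) := by
    intro x
    simp only [map_add, map_sub, MvPolynomial.smul_eval]; ring
  rw [integral_congr_ae (ae_of_all _ e1), integral_add (i1 _ _) (i1 _ _), ibp, ibp, ← neg_add,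
    neg_nonpos, ← integral_add (i2 _ _) (i2 _ _)]
  refine integral_nonneg fun x => ?_
  simp only [Pi.zero_apply]
  rw [← Finset.sum_add_distrib]
  refine Finset.sum_nonneg fun j _ => ?_
  have hS1 : S x ^ (p / 2 - 1) = S x * S x ^ (p / 2 - 2) := by
    rw [show p / 2 - 1 = 1 + (p / 2 - 2) by ring, rpow_add (hSpos x), rpow_one]
  have key := dissipation_pointwise (A := MvPolynomial.eval x (MvPolynomial.pderiv j a))
    (B := MvPolynomial.eval x (MvPolynomial.pderiv j b)) hσ hστ
    (show MvPolynomial.eval x a ^ 2 + MvPolynomial.eval x b ^ 2 ≤ S x by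
      simp only [hSdef]; linarith)
  have := mul_nonneg (rpow_nonneg (hSpos x).le (p / 2 - 2)) key
  refine this.trans_eq ?_
  rw [hS1]
  simp only [D, map_add, map_sub, map_mul, MvPolynomial.smul_eval, Derivation.map_smul]
  ring

/-- Differentiation under the integral sign for regularized `L^p` norms along a smooth path in a
finite-dimensional space of polynomials. -/
lemma hasDerivAt_integral_regularized {k N : ℕ} (F : ℕ → MvPolynomial (Fin k) ℝ)
    {ρ η ρ' η' : ℕ → ℝ → ℝ} (hρ : ∀ n r, HasDerivAt (ρ n) (ρ' n r) r)
    (hη : ∀ n r, HasDerivAt (η n) (η' n r) r) (hρ' : ∀ n, Continuous (ρ' n))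
    (hη' : ∀ n, Continuous (η' n)) {p ε : ℝ} (hp : 1 < p) (hε : 0 < ε) (r₀ : ℝ) :
    HasDerivAt (fun r => ∫ x, ((∑ n ∈ Finset.range N, ρ n r * MvPolynomial.eval x (F n)) ^ 2 +
        (∑ n ∈ Finset.range N, η n r * MvPolynomial.eval x (F n)) ^ 2 + ε) ^ (p / 2)
        ∂(gaussMeasure k))
      (∫ x, p * (((∑ n ∈ Finset.range N, ρ n r₀ * MvPolynomial.eval x (F n)) ^ 2 +
        (∑ n ∈ Finset.range N, η n r₀ * MvPolynomial.eval x (F n)) ^ 2 + ε) ^ (p / 2 - 1) *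
        ((∑ n ∈ Finset.range N, ρ n r₀ * MvPolynomial.eval x (F n)) *
            (∑ n ∈ Finset.range N, ρ' n r₀ * MvPolynomial.eval x (F n)) +
          (∑ n ∈ Finset.range N, η n r₀ * MvPolynomial.eval x (F n)) *
            (∑ n ∈ Finset.range N, η' n r₀ * MvPolynomial.eval x (F n))))
        ∂(gaussMeasure k)) r₀ := by
  have hρc : ∀ n, Continuous (ρ n) := fun n =>
    continuous_iff_continuousAt.2 fun r => (hρ n r).continuousAt
  have hηc : ∀ n, Continuous (η n) := fun n =>
    continuous_iff_continuousAt.2 fun r => (hη n r).continuousAt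
  have hFc := fun n => continuous_eval_poly (F n)
  let m : ℝ → ℝ := fun r => ∑ n ∈ Finset.range N, (|ρ n r| + |η n r| + |ρ' n r| + |η' n r|)
  have hm : Continuous m := by fun_prop
  obtain ⟨K, hK⟩ := (isCompact_closedBall r₀ 1).exists_bound_of_continuousOn hm.continuousOn
  have hKn : ∀ r ∈ Metric.closedBall r₀ 1, ∀ n ∈ Finset.range N,
      |ρ n r| ≤ K ∧ |η n r| ≤ K ∧ |ρ' n r| ≤ K ∧ |η' n r| ≤ K := by
    intro r hr n hn
    have h1 := (le_abs_self _).trans (hK r hr)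
    have h2 := Finset.single_le_sum
      (f := fun n => |ρ n r| + |η n r| + |ρ' n r| + |η' n r|) (fun i _ => by positivity) hn
    have h3 := h2.trans h1
    have := abs_nonneg (ρ n r)
    have := abs_nonneg (η n r)
    have := abs_nonneg (ρ' n r)
    have := abs_nonneg (η' n r)
    refine ⟨?_, ?_, ?_, ?_⟩ <;> linarith
  have hK0 : 0 ≤ K := (norm_nonneg _).trans (hK r₀ (Metric.mem_closedBall_self zero_le_one))
  let T : (Fin k → ℝ) → ℝ := fun x => ∑ n ∈ Finset.range N, |MvPolynomial.eval x (F n)|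
  have hTc : Continuous T := by fun_prop
  have hT0 : ∀ x, 0 ≤ T x := fun x => Finset.sum_nonneg fun _ _ => abs_nonneg _
  have hTb : ExpBdd T := ExpBdd.sum _ fun n _ => (ExpBdd.eval (F n)).mono fun x => by simp
  have hsum : ∀ (ζ : ℕ → ℝ) x, (∀ n ∈ Finset.range N, |ζ n| ≤ K) →
      |∑ n ∈ Finset.range N, ζ n * MvPolynomial.eval x (F n)| ≤ K * T x := by
    intro ζ x hζ
    refine (Finset.abs_sum_le_sum_abs _ _).trans ?_
    simp only [T, Finset.mul_sum, abs_mul]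
    exact Finset.sum_le_sum fun n hn => by gcongr; exact hζ n hn
  let U : (Fin k → ℝ) → ℝ := fun x => 2 * (K * T x) ^ 2 + ε
  have hUε : ∀ x, ε ≤ U x := fun x => by simp only [U]; nlinarith [sq_nonneg (K * T x)]
  have hUc : Continuous U := by fun_prop
  have hUb : ExpBdd U := by
    simp only [U, sq]
    exact ((ExpBdd.const 2).mul (((ExpBdd.const K).mul hTb).mul ((ExpBdd.const K).mul hTb))).add
      (ExpBdd.const ε)
  have hSpos : ∀ A B : ℝ, 0 < A ^ 2 + B ^ 2 + ε := fun A B => by positivity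
  refine (hasDerivAt_integral_of_dominated_loc_of_deriv_le
    (bound := fun x => p * ((ε ^ (p / 2 - 1) + U x ^ (p / 2 - 1)) *
      (K * T x * (K * T x) + K * T x * (K * T x))))
    (F' := fun r x => p * (((∑ n ∈ Finset.range N, ρ n r * MvPolynomial.eval x (F n)) ^ 2 +
        (∑ n ∈ Finset.range N, η n r * MvPolynomial.eval x (F n)) ^ 2 + ε) ^ (p / 2 - 1) *
        ((∑ n ∈ Finset.range N, ρ n r * MvPolynomial.eval x (F n)) *
            (∑ n ∈ Finset.range N, ρ' n r * MvPolynomial.eval x (F n)) +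
          (∑ n ∈ Finset.range N, η n r * MvPolynomial.eval x (F n)) *
            (∑ n ∈ Finset.range N, η' n r * MvPolynomial.eval x (F n)))))
    (Metric.closedBall_mem_nhds r₀ one_pos) ?_ ?_ ?_ ?_ ?_ ?_).2
  · refine Filter.Eventually.of_forall fun r => Continuous.aestronglyMeasurable ?_
    exact Continuous.rpow_const (by fun_prop) fun x => Or.inl (hSpos _ _).ne'
  · have hb : ∀ ζ : ℕ → ℝ, ExpBdd fun x =>
        ∑ n ∈ Finset.range N, ζ n * MvPolynomial.eval x (F n) := fun ζ =>
      ExpBdd.sum _ fun n _ => (ExpBdd.const _).mul (ExpBdd.eval _)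
    refine ExpBdd.integrable ?_ ?_
    · refine ExpBdd.rpow_of_le ?_ hε (fun x => ?_) _
      · simp only [sq]
        exact (((hb _).mul (hb _)).add ((hb _).mul (hb _))).add (ExpBdd.const ε)
      · nlinarith [sq_nonneg (∑ n ∈ Finset.range N, ρ n r₀ * MvPolynomial.eval x (F n)),
          sq_nonneg (∑ n ∈ Finset.range N, η n r₀ * MvPolynomial.eval x (F n))]
    · exact Continuous.rpow_const (by fun_prop) fun x => Or.inl (hSpos _ _).ne'
  · refine Continuous.aestronglyMeasurable ?_
    refine continuous_const.mul (Continuous.mul ?_ (by fun_prop))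
    exact Continuous.rpow_const (by fun_prop) fun x => Or.inl (hSpos _ _).ne'
  · refine ae_of_all _ fun x r hr => ?_
    have hK' := hKn r hr
    have h1 := hsum (fun n => ρ n r) x fun n hn => (hK' n hn).1
    have h2 := hsum (fun n => η n r) x fun n hn => (hK' n hn).2.1
    have h3 := hsum (fun n => ρ' n r) x fun n hn => (hK' n hn).2.2.1
    have h4 := hsum (fun n => η' n r) x fun n hn => (hK' n hn).2.2.2
    set A := ∑ n ∈ Finset.range N, ρ n r * MvPolynomial.eval x (F n)
    set B := ∑ n ∈ Finset.range N, η n r * MvPolynomial.eval x (F n)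
    have hKT : 0 ≤ K * T x := mul_nonneg hK0 (hT0 x)
    have hS : (A ^ 2 + B ^ 2 + ε) ^ (p / 2 - 1) ≤ ε ^ (p / 2 - 1) + U x ^ (p / 2 - 1) := by
      refine rpow_le_rpow_add_rpow hε (by nlinarith [sq_nonneg A, sq_nonneg B]) ?_
      simp only [U]
      nlinarith [sq_le_sq' (neg_le_of_abs_le h1) (le_of_abs_le h1),
        sq_le_sq' (neg_le_of_abs_le h2) (le_of_abs_le h2)]
    rw [norm_mul, norm_mul, norm_of_nonneg (by linarith : (0 : ℝ) ≤ p),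
      norm_of_nonneg (rpow_nonneg (hSpos A B).le _)]
    refine mul_le_mul_of_nonneg_left (mul_le_mul hS ?_ (norm_nonneg _) ?_) (by linarith)
    · refine (norm_add_le _ _).trans ?_
      rw [norm_mul, norm_mul]
      exact add_le_add (mul_le_mul h1 h3 (abs_nonneg _) hKT)
        (mul_le_mul h2 h4 (abs_nonneg _) hKT)
    · exact add_nonneg (rpow_nonneg hε.le _) (rpow_nonneg (hε.le.trans (hUε x)) _)
  · have hKTb : ExpBdd fun x => K * T x := (ExpBdd.const K).mul hTb
    refine ExpBdd.integrable ?_ ?_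
    · exact (ExpBdd.const p).mul (((ExpBdd.const _).add (hUb.rpow_of_le hε hUε _)).mul
        ((hKTb.mul hKTb).add (hKTb.mul hKTb)))
    · refine continuous_const.mul (Continuous.mul (continuous_const.add ?_) (by fun_prop))
      exact hUc.rpow_const fun x => Or.inl (hε.trans_le (hUε x)).ne'
  · refine ae_of_all _ fun x r _ => ?_
    have hd : ∀ {ζ ζ' : ℕ → ℝ → ℝ}, (∀ n r, HasDerivAt (ζ n) (ζ' n r) r) →
        HasDerivAt (fun r => ∑ n ∈ Finset.range N, ζ n r * MvPolynomial.eval x (F n))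
          (∑ n ∈ Finset.range N, ζ' n r * MvPolynomial.eval x (F n)) r := fun h =>
      HasDerivAt.fun_sum fun n _ => (h n r).mul_const _
    refine (((((hd hρ).fun_pow 2).fun_add ((hd hη).fun_pow 2)).add_const ε).rpow_const
      (Or.inl (hSpos _ _).ne')).congr_deriv ?_
    simp only [Nat.cast_ofNat, Nat.add_one_sub_one, pow_one]
    ring

/-- Contractivity on `L^p` of the Ornstein–Uhlenbeck semigroup at complex times in a sector, on
finite sums of eigenfunctions, in terms of real and imaginary parts. -/
lemma integral_semigroup_le {k N : ℕ} {F : ℕ → MvPolynomial (Fin k) ℝ}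
    (hF : ∀ n, ouOp (F n) = (-(n : ℝ)) • F n) {p σ τ : ℝ} (hp : 1 < p) (hσ : 0 ≤ σ)
    (hστ : (p - 2) ^ 2 * τ ^ 2 ≤ 4 * (p - 1) * σ ^ 2) :
    ∫ x, ((∑ n ∈ Finset.range N, exp (-n * σ) * cos (n * τ) * MvPolynomial.eval x (F n)) ^ 2 +
      (∑ n ∈ Finset.range N, -(exp (-n * σ) * sin (n * τ)) * MvPolynomial.eval x (F n)) ^ 2)
        ^ (p / 2) ∂(gaussMeasure k) ≤
      ∫ x, |∑ n ∈ Finset.range N, MvPolynomial.eval x (F n)| ^ p ∂(gaussMeasure k) := by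
  let ρ : ℕ → ℝ → ℝ := fun n r => exp (-n * σ * r) * cos (n * τ * r)
  let η : ℕ → ℝ → ℝ := fun n r => -(exp (-n * σ * r) * sin (n * τ * r))
  let ρ' : ℕ → ℝ → ℝ := fun n r => -n * (σ * ρ n r - τ * η n r)
  let η' : ℕ → ℝ → ℝ := fun n r => -n * (σ * η n r + τ * ρ n r)
  have hE : ∀ (n : ℕ) r, HasDerivAt (fun r => exp (-n * σ * r))
      (exp (-n * σ * r) * (-n * σ)) r := fun n r => by
    simpa using ((hasDerivAt_id' r).const_mul (-n * σ)).exp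
  have hρ : ∀ n r, HasDerivAt (ρ n) (ρ' n r) r := fun n r => by
    have h := ((hasDerivAt_id' r).const_mul (n * τ)).cos
    refine ((hE n r).fun_mul h).congr_deriv ?_
    simp only [ρ', ρ, η]; ring
  have hη : ∀ n r, HasDerivAt (η n) (η' n r) r := fun n r => by
    have h := ((hasDerivAt_id' r).const_mul (n * τ)).sin
    refine ((hE n r).fun_mul h).fun_neg.congr_deriv ?_
    simp only [η', ρ, η]; ring
  have hρ'c : ∀ n, Continuous (ρ' n) := fun n => by simp only [ρ', ρ, η]; fun_prop
  have hη'c : ∀ n, Continuous (η' n) := fun n => by simp only [η', ρ, η]; fun_prop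
  have hFc := fun n => continuous_eval_poly (F n)
  have hb : ∀ ζ : ℕ → ℝ, ExpBdd fun x =>
      ∑ n ∈ Finset.range N, ζ n * MvPolynomial.eval x (F n) := fun ζ =>
    ExpBdd.sum _ fun n _ => (ExpBdd.const _).mul (ExpBdd.eval _)
  have hreg : ∀ (ζ ξ : ℕ → ℝ) {ε : ℝ}, 0 ≤ ε → Integrable (fun x =>
      ((∑ n ∈ Finset.range N, ζ n * MvPolynomial.eval x (F n)) ^ 2 +
        (∑ n ∈ Finset.range N, ξ n * MvPolynomial.eval x (F n)) ^ 2 + ε) ^ (p / 2))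
        (gaussMeasure k) := by
    intro ζ ξ ε hε
    refine ExpBdd.integrable ?_ (Continuous.rpow_const (by fun_prop) fun x =>
      Or.inr (by linarith))
    have h1 : ExpBdd fun x => (∑ n ∈ Finset.range N, ζ n * MvPolynomial.eval x (F n)) ^ 2 +
        (∑ n ∈ Finset.range N, ξ n * MvPolynomial.eval x (F n)) ^ 2 + ε := by
      simp only [sq]
      exact (((hb _).mul (hb _)).add ((hb _).mul (hb _))).add (ExpBdd.const ε)
    refine (h1.abs_rpow (s := p / 2) (by linarith)).mono fun x => ?_
    rw [abs_of_nonneg (a := (∑ n ∈ Finset.range N, ζ n * MvPolynomial.eval x (F n)) ^ 2 +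
        (∑ n ∈ Finset.range N, ξ n * MvPolynomial.eval x (F n)) ^ 2 + ε) (by positivity)]
  have hstep : ∀ ε : ℝ, 0 < ε →
      ∫ x, ((∑ n ∈ Finset.range N, ρ n 1 * MvPolynomial.eval x (F n)) ^ 2 +
        (∑ n ∈ Finset.range N, η n 1 * MvPolynomial.eval x (F n)) ^ 2 + ε) ^ (p / 2)
        ∂(gaussMeasure k) ≤
      ∫ x, ((∑ n ∈ Finset.range N, ρ n 0 * MvPolynomial.eval x (F n)) ^ 2 +
        (∑ n ∈ Finset.range N, η n 0 * MvPolynomial.eval x (F n)) ^ 2 + ε) ^ (p / 2)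
        ∂(gaussMeasure k) := by
    intro ε hε
    refine antitone_of_hasDerivAt_nonpos
      (fun r => hasDerivAt_integral_regularized F hρ hη hρ'c hη'c hp hε r) (fun r => ?_)
      zero_le_one
    have h := integral_dissipation_nonpos (p := p) hσ hστ hε
      (∑ n ∈ Finset.range N, ρ n r • F n) (∑ n ∈ Finset.range N, η n r • F n)
    rw [Pi.zero_apply]
    beta_reduce
    rw [integral_const_mul]
    refine mul_nonpos_of_nonneg_of_nonpos (by linarith) (le_of_eq_of_le ?_ h)
    refine integral_congr_ae (ae_of_all _ fun x => ?_)
    have h1 : ∀ ζ : ℕ → ℝ, MvPolynomial.eval x (∑ n ∈ Finset.range N, ζ n • F n) =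
        ∑ n ∈ Finset.range N, ζ n * MvPolynomial.eval x (F n) := fun ζ => by
      simp [MvPolynomial.smul_eval]
    have h2 : ∀ ζ : ℕ → ℝ, MvPolynomial.eval x (ouOp (∑ n ∈ Finset.range N, ζ n • F n)) =
        ∑ n ∈ Finset.range N, (-n * ζ n) * MvPolynomial.eval x (F n) := fun ζ => by
      simp only [map_sum, map_smul, hF, smul_smul, MvPolynomial.smul_eval]
      exact Finset.sum_congr rfl fun n _ => by ring
    simp only [h1, h2]
    congr 3
    · rw [Finset.mul_sum, Finset.mul_sum, ← Finset.sum_sub_distrib]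
      exact Finset.sum_congr rfl fun n _ => by simp only [ρ']; ring
    · rw [Finset.mul_sum, Finset.mul_sum, ← Finset.sum_add_distrib]
      exact Finset.sum_congr rfl fun n _ => by simp only [η']; ring
  simp only [ρ, η, mul_zero, exp_zero, cos_zero, sin_zero, mul_one, neg_zero, zero_mul, one_mul,
    Finset.sum_const_zero] at hstep
  set Q : (Fin k → ℝ) → ℝ := fun x => ∑ n ∈ Finset.range N, MvPolynomial.eval x (F n) with hQ
  have hlim : Filter.Tendsto (fun m : ℕ => ∫ x, (Q x ^ 2 + 0 ^ 2 + 1 / ((m : ℝ) + 1)) ^ (p / 2)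
      ∂(gaussMeasure k)) Filter.atTop (nhds (∫ x, |Q x| ^ p ∂(gaussMeasure k))) := by
    refine tendsto_integral_of_dominated_convergence (fun x => (Q x ^ 2 + 0 ^ 2 + 1) ^ (p / 2))
      (fun m => ?_) ?_ (fun m => ae_of_all _ fun x => ?_) (ae_of_all _ fun x => ?_)
    · exact (Continuous.rpow_const (by fun_prop) fun x =>
        Or.inr (by linarith)).aestronglyMeasurable
    · simpa [hQ] using hreg (fun _ => 1) (fun _ => 0) zero_le_one
    · rw [norm_of_nonneg (by positivity)]
      have : 1 / ((m : ℝ) + 1) ≤ 1 := by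
        rw [div_le_one (by positivity)]; linarith [(Nat.cast_nonneg m : (0 : ℝ) ≤ m)]
      gcongr
    · have h1 : |Q x| ^ p = (Q x ^ 2 + 0 ^ 2 + 0) ^ (p / 2) := by
        rw [show Q x ^ 2 + 0 ^ 2 + 0 = |Q x| ^ (2 : ℝ) by simp, ← rpow_mul (abs_nonneg _)]
        congr 1; ring
      rw [h1]
      exact (tendsto_const_nhds.add tendsto_one_div_add_atTop_nhds_zero_nat).rpow_const
        (Or.inr (by linarith))
  refine ge_of_tendsto' hlim fun m => ?_
  have hm : (0 : ℝ) < 1 / ((m : ℝ) + 1) := by positivity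
  refine le_trans ?_ (hstep _ hm)
  refine integral_mono ?_ (hreg _ _ hm.le) fun x => ?_
  · simpa using hreg (fun n => exp (-n * σ) * cos (n * τ))
      (fun n => -(exp (-n * σ) * sin (n * τ))) le_rfl
  · exact rpow_le_rpow (by positivity) (le_add_of_nonneg_right hm.le) (by linarith)

lemma integral_norm_semigroup_le {k N : ℕ} {F : ℕ → MvPolynomial (Fin k) ℝ}
    (hF : ∀ n, ouOp (F n) = (-(n : ℝ)) • F n) {p : ℝ} (hp : 1 < p) {z : ℂ} (hz : 0 ≤ z.re)
    (hz' : (p - 2) ^ 2 * z.im ^ 2 ≤ 4 * (p - 1) * z.re ^ 2) :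
    ∫ x, ‖∑ n ∈ Finset.range N, Complex.exp (-n * z) * (MvPolynomial.eval x (F n) : ℂ)‖ ^ p
        ∂(gaussMeasure k) ≤
      ∫ x, |∑ n ∈ Finset.range N, MvPolynomial.eval x (F n)| ^ p ∂(gaussMeasure k) := by
  refine le_of_eq_of_le (integral_congr_ae (ae_of_all _ fun x => ?_))
    (integral_semigroup_le hF (N := N) hp hz hz')
  dsimp only
  set w := ∑ n ∈ Finset.range N, Complex.exp (-n * z) * (MvPolynomial.eval x (F n) : ℂ) with hw
  have hre : w.re = ∑ n ∈ Finset.range N,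
      exp (-n * z.re) * cos (n * z.im) * MvPolynomial.eval x (F n) := by
    simp [hw, Complex.exp_re]
  have him : w.im = ∑ n ∈ Finset.range N,
      -(exp (-n * z.re) * sin (n * z.im)) * MvPolynomial.eval x (F n) := by
    simp [hw, Complex.exp_im]
  rw [← hre, ← him, Complex.norm_def, Complex.normSq_apply, sqrt_eq_rpow, ← rpow_mul]
  · congr 1 <;> ring
  · nlinarith [mul_self_nonneg w.re, mul_self_nonneg w.im]

/-! ### Extrapolation from a sector -/

/-- A Dirichlet polynomial bounded by `M` on a sector around the positive half-line grows at most
exponentially in its degree. -/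
lemma norm_expSum_le_of_re_le {κ M : ℝ} (hκ : 0 ≤ κ) {d : ℕ} {c : ℕ → ℂ}
    (hM : ∀ z : ℂ, κ * |z.im| ≤ z.re →
      ‖∑ n ∈ Finset.range (d + 1), c n * Complex.exp (-n * z)‖ ≤ M)
    {z : ℂ} (hz : z.re ≤ κ * π) :
    ‖∑ n ∈ Finset.range (d + 1), c n * Complex.exp (-n * z)‖ ≤
      M * exp (d * (κ * π - z.re)) := by
  have hrev : ∀ w : ℂ, ∑ n ∈ Finset.range (d + 1), c n * Complex.exp w ^ (d - n) =
      Complex.exp (d * w) * ∑ n ∈ Finset.range (d + 1), c n * Complex.exp (-n * w) := by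
    intro w
    rw [Finset.mul_sum]
    refine Finset.sum_congr rfl fun n hn => ?_
    have hn' : n ≤ d := Nat.lt_succ_iff.mp (Finset.mem_range.mp hn)
    rw [← Complex.exp_nat_mul, mul_left_comm, ← Complex.exp_add, Nat.cast_sub hn']
    congr 2
    ring
  have hR : (0 : ℝ) < exp (κ * π) := exp_pos _
  have hball : ∀ u ∈ closure (Metric.ball (0 : ℂ) (exp (κ * π))),
      ‖∑ n ∈ Finset.range (d + 1), c n * u ^ (d - n)‖ ≤ exp (d * (κ * π)) * M := by
    intro u hu
    refine Complex.norm_le_of_forall_mem_frontier_norm_le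
      (f := fun u : ℂ => ∑ n ∈ Finset.range (d + 1), c n * u ^ (d - n))
      Metric.isBounded_ball (Differentiable.diffContOnCl (by fun_prop)) (fun v hv => ?_) hu
    rw [frontier_ball _ hR.ne', mem_sphere_zero_iff_norm] at hv
    have hv0 : v ≠ 0 := by
      rintro rfl
      simp at hv
      exact hR.ne hv
    have hre : (Complex.log v).re = κ * π := by rw [Complex.log_re, hv, log_exp]
    have h := hrev (Complex.log v)
    rw [Complex.exp_log hv0] at h
    rw [h, norm_mul, Complex.norm_exp]
    have h2 := hM (Complex.log v) (by
      rw [hre, Complex.log_im]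
      exact mul_le_mul_of_nonneg_left (Complex.abs_arg_le_pi v) hκ)
    rw [show ((d : ℂ) * Complex.log v).re = d * (κ * π) by simp [hre]]
    gcongr
  have hu := hball (Complex.exp z) (by
    rw [closure_ball _ hR.ne', mem_closedBall_zero_iff, Complex.norm_exp]
    exact exp_le_exp.mpr hz)
  rw [hrev, norm_mul, Complex.norm_exp] at hu
  rw [show ((d : ℂ) * z).re = d * z.re by simp] at hu
  rw [mul_sub, exp_sub, ← mul_div_assoc, le_div_iff₀ (exp_pos _)]
  linarith

lemma norm_expSum_le_of_norm_le_one {κ M : ℝ} (hκ : 0 ≤ κ) (hM0 : 0 ≤ M) {d : ℕ} {c : ℕ → ℂ}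
    (hM : ∀ z : ℂ, κ * |z.im| ≤ z.re →
      ‖∑ n ∈ Finset.range (d + 1), c n * Complex.exp (-n * z)‖ ≤ M)
    {z : ℂ} (hz : ‖z‖ ≤ 1) :
    ‖∑ n ∈ Finset.range (d + 1), c n * Complex.exp (-n * z)‖ ≤
      M * exp (d * (1 + κ * π)) := by
  have hre := (abs_le.mp ((Complex.abs_re_le_norm z).trans hz)).1
  rcases le_total z.re (κ * π) with h | h
  · refine (norm_expSum_le_of_re_le hκ hM h).trans ?_
    gcongr
    linarith
  · refine (hM z ?_).trans (le_mul_of_one_le_right hM0 (one_le_exp (by positivity)))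
    have him := (Complex.abs_im_le_norm z).trans hz
    exact (mul_le_mul_of_nonneg_left (by linarith [pi_gt_three]) hκ).trans h

/-- The power `ξ ↦ -ξ ^ (1 + 2 / π * arctan κ)` maps the imaginary axis to the boundary of the
sector `κ |Im z| ≤ Re z`. -/
lemma mul_abs_im_neg_cpow_le {κ : ℝ} {ξ : ℂ} (hξ : ξ.re = 0) :
    κ * |(-ξ ^ ((1 + 2 / π * arctan κ : ℝ) : ℂ)).im| ≤
      (-ξ ^ ((1 + 2 / π * arctan κ : ℝ) : ℂ)).re := by
  have hα : 0 < 1 + 2 / π * arctan κ := by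
    have h1 := neg_pi_div_two_lt_arctan κ
    have : 2 / π * (-(π / 2)) < 2 / π * arctan κ := by gcongr
    have h2 : 2 / π * (-(π / 2)) = -1 := by field_simp
    linarith
  rcases eq_or_ne ξ 0 with rfl | h0
  · rw [Complex.zero_cpow (by exact_mod_cast hα.ne')]
    simp
  have key : ∀ θ : ℝ, |θ| = π / 2 → θ * (1 + 2 / π * arctan κ) = π / 2 + arctan κ ∨
      θ * (1 + 2 / π * arctan κ) = -(π / 2 + arctan κ) := by
    intro θ hθ
    rcases (abs_eq (by positivity)).mp hθ with rfl | rfl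
    · left; field_simp
    · right; field_simp
  have harg : |Complex.arg ξ| = π / 2 := by
    rcases lt_trichotomy ξ.im 0 with h | h | h
    · rw [Complex.arg_eq_neg_pi_div_two_iff.mpr ⟨hξ, h⟩, abs_neg, abs_of_pos (by positivity)]
    · exact absurd (Complex.ext hξ h) h0
    · rw [Complex.arg_eq_pi_div_two_iff.mpr ⟨hξ, h⟩, abs_of_pos (by positivity)]
  have hcos : cos (Complex.arg ξ * (1 + 2 / π * arctan κ)) = -(κ / √(1 + κ ^ 2)) := by
    rw [← sin_arctan]
    rcases key _ harg with h | h <;> rw [h]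
    · rw [add_comm, cos_add_pi_div_two]
    · rw [cos_neg, add_comm, cos_add_pi_div_two]
  have hsin : |sin (Complex.arg ξ * (1 + 2 / π * arctan κ))| = 1 / √(1 + κ ^ 2) := by
    rw [← cos_arctan, ← abs_of_pos (cos_arctan_pos κ)]
    rcases key _ harg with h | h <;> rw [h]
    · rw [add_comm, sin_add_pi_div_two]
    · rw [sin_neg, add_comm, sin_add_pi_div_two, abs_neg]
  rw [Complex.neg_im, Complex.neg_re, Complex.cpow_ofReal_im, Complex.cpow_ofReal_re, abs_neg,
    abs_mul, hsin, hcos, abs_of_nonneg (by positivity)]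
  exact le_of_eq (by ring)

/-- Extrapolation of a bound on a sector to a point outside of it at distance `d ^ (-α)`, where
`α π` is the opening of the complementary sector. -/
lemma norm_expSum_neg_rpow_le {κ M : ℝ} (hκ : 0 ≤ κ) (hM0 : 0 ≤ M) {d : ℕ} (hd : 1 ≤ d)
    {c : ℕ → ℂ}
    (hM : ∀ z : ℂ, κ * |z.im| ≤ z.re →
      ‖∑ n ∈ Finset.range (d + 1), c n * Complex.exp (-n * z)‖ ≤ M) :
    ‖∑ n ∈ Finset.range (d + 1),
        c n * Complex.exp (-n * (-((1 / d : ℝ) ^ (1 + 2 / π * arctan κ) : ℝ)))‖ ≤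
      M * exp (2 * (1 + κ * π)) := by
  set α := 1 + 2 / π * arctan κ with hα
  have hα0 : 0 < α := by
    have := arctan_nonneg.mpr hκ
    positivity
  set K := 1 + κ * π with hK
  have hK0 : 0 ≤ K := by positivity
  set h : ℂ → ℂ := fun z => ∑ n ∈ Finset.range (d + 1), c n * Complex.exp (-n * z) with hh
  have hunit : ∀ z : ℂ, ‖z‖ ≤ 1 → ‖h z‖ ≤ M * exp (d * K) := fun z hz =>
    norm_expSum_le_of_norm_le_one hκ hM0 hM hz
  change ‖h (-((1 / d : ℝ) ^ α : ℝ))‖ ≤ _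
  rcases hd.eq_or_lt with rfl | hd2
  · refine (hunit _ (by simp)).trans ?_
    gcongr
    norm_num
  have hd0 : (0 : ℝ) < d := by positivity
  set U : Set ℂ := {ξ | 0 < ξ.re} ∩ Metric.ball 0 1 with hU
  have hUo : IsOpen U :=
    (isOpen_lt continuous_const Complex.continuous_re).inter Metric.isOpen_ball
  have hcl : closure U ⊆ {ξ | 0 ≤ ξ.re} ∩ Metric.closedBall 0 1 := by
    refine closure_minimal (fun ξ hξ => ⟨(show 0 < ξ.re from hξ.1).le, Metric.ball_subset_closedBall hξ.2⟩) ?_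
    exact (isClosed_le continuous_const Complex.continuous_re).inter Metric.isClosed_closedBall
  set E : ℂ → ℂ := fun ξ => Complex.exp (-(2 * K * d : ℝ) * (ξ - ξ ^ 2 / 2)) with hE
  have hnE : ∀ ξ : ℂ, ‖E ξ‖ = exp (-(2 * K * d) * (ξ.re - (ξ.re ^ 2 - ξ.im ^ 2) / 2)) := by
    intro ξ
    rw [hE, Complex.norm_exp]
    congr 1
    rw [← Complex.ofReal_neg, Complex.re_ofReal_mul]
    simp [sq]
  have hdiff : Differentiable ℂ h := by fun_prop
  have hdiffE : Differentiable ℂ E := by fun_prop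
  have hH : DiffContOnCl ℂ (fun ξ : ℂ => h (-ξ ^ (α : ℂ)) * E ξ) U := by
    refine ⟨fun ξ hξ => ?_, fun ξ hξ => ?_⟩
    · refine DifferentiableAt.differentiableWithinAt ?_
      refine DifferentiableAt.mul ?_ (hdiffE ξ)
      refine (hdiff _).comp ξ (DifferentiableAt.neg ?_)
      exact differentiableAt_id.cpow_const (Or.inl hξ.1)
    · refine ContinuousAt.continuousWithinAt ?_
      refine ContinuousAt.mul ?_ hdiffE.continuous.continuousAt
      refine hdiff.continuous.continuousAt.comp (ContinuousAt.neg ?_)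
      exact Complex.continuousAt_cpow_const_of_re_pos (Or.inl (hcl hξ).1) (by simpa using hα0)
  have hmem : ((1 / d : ℝ) : ℂ) ∈ U := by
    refine ⟨by simpa using hd0, ?_⟩
    rw [mem_ball_zero_iff, Complex.norm_real, norm_of_nonneg (by positivity), div_lt_one hd0]
    exact_mod_cast hd2
  have hbd : ∀ ξ ∈ frontier U, ‖h (-ξ ^ (α : ℂ)) * E ξ‖ ≤ M := by
    intro ξ hξ
    rw [hUo.frontier_eq] at hξ
    obtain ⟨hre, hball⟩ := hcl hξ.1
    rw [Set.mem_ofPred_eq] at hre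
    rw [mem_closedBall_zero_iff] at hball
    rw [norm_mul, hnE]
    rcases hre.eq_or_lt with h0 | h0
    · refine mul_le_of_le_one_right hM0 ?_ |>.trans' (mul_le_mul_of_nonneg_right
        (hM _ (mul_abs_im_neg_cpow_le h0.symm)) (exp_pos _).le)
      rw [← h0, exp_le_one_iff]
      have : 0 ≤ K * d * ξ.im ^ 2 := by positivity
      nlinarith
    · have h1 : ‖ξ‖ = 1 := by
        by_contra hne
        exact hξ.2 ⟨h0, mem_ball_zero_iff.mpr (lt_of_le_of_ne hball hne)⟩
      have h2 : ‖-ξ ^ (α : ℂ)‖ ≤ 1 := by rw [norm_neg, Complex.norm_cpow_real, h1, one_rpow]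
      refine (mul_le_mul_of_nonneg_right (hunit _ h2) (exp_pos _).le).trans ?_
      rw [mul_assoc, ← exp_add]
      refine mul_le_of_le_one_right hM0 (exp_le_one_iff.mpr ?_)
      have h3 : ξ.re ^ 2 + ξ.im ^ 2 = 1 := by
        have := Complex.sq_norm ξ
        rw [h1, Complex.normSq_apply] at this
        linarith
      have h4 : ξ.re ≤ 1 := (Complex.re_le_norm ξ).trans hball
      have h5 : 1 / 2 ≤ ξ.re - (ξ.re ^ 2 - ξ.im ^ 2) / 2 := by nlinarith
      have h6 : 0 ≤ K * d := by positivity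
      nlinarith [mul_le_mul_of_nonneg_left h5 h6]
  have hfin := Complex.norm_le_of_forall_mem_frontier_norm_le
    (Metric.isBounded_ball.subset Set.inter_subset_right) hH hbd (subset_closure hmem)
  rw [norm_mul, hnE, ← Complex.ofReal_cpow (by positivity)] at hfin
  refine le_of_mul_le_mul_right (hfin.trans ?_) (exp_pos _)
  rw [mul_assoc, ← exp_add]
  refine le_mul_of_one_le_right hM0 (one_le_exp ?_)
  simp only [Complex.ofReal_re, Complex.ofReal_im]
  field_simp
  nlinarith

/-! ### Duality -/

/-- The signed power `s ↦ sign s * |s| ^ (p - 1)`, the duality map of `L^p`. -/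
noncomputable def signedPow (p s : ℝ) : ℝ := max s 0 ^ (p - 1) - max (-s) 0 ^ (p - 1)

lemma continuous_signedPow {p : ℝ} (hp : 1 < p) : Continuous (signedPow p) := by
  unfold signedPow
  refine Continuous.sub ?_ ?_ <;>
    exact Continuous.rpow_const (by fun_prop) fun x => Or.inr (by linarith)

lemma abs_signedPow {p : ℝ} (hp : 1 < p) (s : ℝ) : |signedPow p s| = |s| ^ (p - 1) := by
  have hp' : p - 1 ≠ 0 := by linarith
  unfold signedPow
  rcases le_total 0 s with hs | hs
  · rw [max_eq_left hs, max_eq_right (by linarith), zero_rpow hp', sub_zero, abs_of_nonneg hs,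
      abs_of_nonneg (by positivity)]
  · have hs' : 0 ≤ -s := by linarith
    rw [max_eq_right hs, max_eq_left hs', zero_rpow hp', zero_sub, abs_of_nonpos hs, abs_neg,
      abs_of_nonneg (by positivity)]

lemma mul_signedPow {p : ℝ} (hp : 1 < p) (s : ℝ) : s * signedPow p s = |s| ^ p := by
  have hp' : p - 1 ≠ 0 := by linarith
  have key : ∀ r : ℝ, 0 ≤ r → r * r ^ (p - 1) = r ^ p := by
    intro r hr
    rw [← rpow_one_add' hr (by linarith)]
    congr 1
    ring
  unfold signedPow
  rcases le_total 0 s with hs | hs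
  · rw [max_eq_left hs, max_eq_right (by linarith), zero_rpow hp', sub_zero, abs_of_nonneg hs,
      key s hs]
  · have hs' : 0 ≤ -s := by linarith
    rw [max_eq_right hs, max_eq_left hs', zero_rpow hp', zero_sub, abs_of_nonpos hs,
      mul_neg, ← neg_mul, key _ hs']

/-- Running the Ornstein-Uhlenbeck semigroup backwards for time `d ^ (-α)` on polynomials of
degree `d` is bounded on `L^p`. -/
lemma lpNorm_backward_semigroup_le {k d : ℕ} {F : ℕ → MvPolynomial (Fin k) ℝ}
    (hF : ∀ n, ouOp (F n) = (-(n : ℝ)) • F n) {p : ℝ} (hp : 1 < p) (hd : 1 ≤ d) {κ t : ℝ}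
    (hκ : κ = |p - 2| / (2 * √(p - 1)))
    (ht : t = (1 / d : ℝ) ^ (1 + 2 / π * arctan κ)) :
    (∫ x, |∑ n ∈ Finset.range (d + 1), exp (n * t) * MvPolynomial.eval x (F n)| ^ p
        ∂(gaussMeasure k)) ^ (1 / p) ≤
      (∫ x, |∑ n ∈ Finset.range (d + 1), MvPolynomial.eval x (F n)| ^ p
        ∂(gaussMeasure k)) ^ (1 / p) * exp (2 * (1 + κ * π)) := by
  have hp0 : 0 < p := by linarith
  have hκ0 : 0 ≤ κ := by rw [hκ]; positivity
  set q := p.conjExponent with hq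
  have hpq : p.HolderConjugate q := Real.HolderConjugate.conjExponent hp
  have hcF : ∀ n, Continuous fun x => MvPolynomial.eval x (F n) := fun n =>
    continuous_eval_poly (F n)
  set Q : (Fin k → ℝ) → ℝ := fun x =>
    ∑ n ∈ Finset.range (d + 1), exp (n * t) * MvPolynomial.eval x (F n) with hQ
  have hQc : Continuous Q := by fun_prop
  have hQb : ExpBdd Q := ExpBdd.sum _ fun n _ => (ExpBdd.const _).mul (ExpBdd.eval _)
  set A := ∫ x, |∑ n ∈ Finset.range (d + 1), MvPolynomial.eval x (F n)| ^ p ∂(gaussMeasure k)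
    with hA
  set B := ∫ x, |Q x| ^ p ∂(gaussMeasure k) with hB
  have hA0 : 0 ≤ A := integral_nonneg fun x => by positivity
  have hB0 : 0 ≤ B := integral_nonneg fun x => by positivity
  set g : (Fin k → ℝ) → ℝ := fun x => signedPow p (Q x) with hg
  have hgc : Continuous g := (continuous_signedPow hp).comp hQc
  have hgb : ExpBdd g := (hQb.abs_rpow (s := p - 1) (by linarith)).mono fun x => by
    rw [hg, abs_signedPow hp, abs_of_nonneg (a := |Q x| ^ (p - 1)) (by positivity)]
  have hgq : ∫ x, |g x| ^ q ∂(gaussMeasure k) = B := by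
    refine integral_congr_ae (ae_of_all _ fun x => ?_)
    simp only [hg]
    rw [abs_signedPow hp, ← rpow_mul (abs_nonneg _), hpq.sub_one_mul_conj]
  set c : ℕ → ℂ := fun n => ((∫ x, MvPolynomial.eval x (F n) * g x ∂(gaussMeasure k) : ℝ) : ℂ)
    with hc
  have hsum : ∀ z : ℂ, ∑ n ∈ Finset.range (d + 1), c n * Complex.exp (-n * z) =
      ∫ x, (∑ n ∈ Finset.range (d + 1),
        Complex.exp (-n * z) * (MvPolynomial.eval x (F n) : ℂ)) * (g x : ℂ)
        ∂(gaussMeasure k) := by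
    intro z
    simp only [Finset.sum_mul]
    rw [integral_finsetSum]
    · refine Finset.sum_congr rfl fun n _ => ?_
      simp only [hc, mul_assoc]
      rw [integral_const_mul, mul_comm, ← integral_complex_ofReal]
      simp
    · intro n _
      simp only [mul_assoc]
      refine Integrable.const_mul ?_ _
      exact_mod_cast (((ExpBdd.eval (F n)).mul hgb).integrable ((hcF n).mul hgc)).ofReal (𝕜 := ℂ)
  have hM : ∀ z : ℂ, κ * |z.im| ≤ z.re →
      ‖∑ n ∈ Finset.range (d + 1), c n * Complex.exp (-n * z)‖ ≤ A ^ (1 / p) * B ^ (1 / q) := by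
    intro z hz
    have hre : 0 ≤ z.re := le_trans (by positivity) hz
    have hsec : (p - 2) ^ 2 * z.im ^ 2 ≤ 4 * (p - 1) * z.re ^ 2 := by
      have h1 : (κ * |z.im|) ^ 2 ≤ z.re ^ 2 := pow_le_pow_left₀ (by positivity) hz 2
      have h2 : (p - 2) ^ 2 = 4 * (p - 1) * κ ^ 2 := by
        have h3 : √(p - 1) ^ 2 = p - 1 := sq_sqrt (by linarith)
        have h4 : p - 1 ≠ 0 := by linarith
        rw [hκ, div_pow, mul_pow, h3, sq_abs]
        field_simp
        ring
      rw [mul_pow, sq_abs] at h1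
      rw [h2, mul_assoc]
      exact mul_le_mul_of_nonneg_left h1 (by linarith)
    set T : (Fin k → ℝ) → ℂ := fun x => ∑ n ∈ Finset.range (d + 1),
      Complex.exp (-n * z) * (MvPolynomial.eval x (F n) : ℂ) with hT
    have hTc : Continuous T := by
      simp only [hT]
      fun_prop
    have hTb : ExpBdd fun x => ‖T x‖ := by
      have h1 : ExpBdd fun x => ∑ n ∈ Finset.range (d + 1),
          ‖Complex.exp (-n * z)‖ * |MvPolynomial.eval x (F n)| ^ (1 : ℝ) :=
        ExpBdd.sum _ fun n _ => (ExpBdd.const _).mul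
          ((ExpBdd.eval _).abs_rpow zero_le_one)
      refine h1.mono fun x => ?_
      rw [abs_of_nonneg (norm_nonneg _)]
      refine (norm_sum_le _ _).trans (le_trans (le_of_eq ?_) (le_abs_self _))
      refine Finset.sum_congr rfl fun n _ => ?_
      rw [norm_mul, Complex.norm_real, rpow_one, norm_eq_abs]
    rw [hsum]
    refine (norm_integral_le_integral_norm _).trans ?_
    simp only [norm_mul, Complex.norm_real]
    have hgabs : ExpBdd fun x => ‖g x‖ := hgb.mono fun x => by simp
    refine (integral_mul_le_Lp_mul_Lq_of_nonneg hpq (ae_of_all _ fun x => norm_nonneg _)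
      (ae_of_all _ fun x => norm_nonneg _) (hTb.memLp hTc.norm hp0)
      (hgabs.memLp hgc.norm hpq.symm.pos)).trans ?_
    simp only [norm_eq_abs]
    rw [hgq]
    refine mul_le_mul_of_nonneg_right (rpow_le_rpow (integral_nonneg fun x => by positivity) ?_
      (by positivity)) (by positivity)
    exact integral_norm_semigroup_le hF hp hre hsec
  have hmain := norm_expSum_neg_rpow_le hκ0 (by positivity) hd hM
  have hval : ∑ n ∈ Finset.range (d + 1),
      c n * Complex.exp (-n * (-((1 / d : ℝ) ^ (1 + 2 / π * arctan κ) : ℝ))) = (B : ℂ) := by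
    rw [← ht, hsum, hB, ← integral_complex_ofReal]
    refine integral_congr_ae (ae_of_all _ fun x => ?_)
    simp only [hg]
    rw [← mul_signedPow hp, Complex.ofReal_mul]
    congr 1
    simp [hQ]
  rw [hval, Complex.norm_real, norm_of_nonneg hB0] at hmain
  rcases hB0.eq_or_lt with h0 | h0
  · rw [← h0, zero_rpow (by positivity)]
    positivity
  · have h1 : B = B ^ (1 / p) * B ^ (1 / q) := by
      rw [← rpow_add h0, one_div, one_div, hpq.inv_add_inv_eq_one, rpow_one]
    have h2 : 0 < B ^ (1 / q) := by positivity
    refine le_of_mul_le_mul_right ?_ h2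
    rw [← h1]
    linarith

/-! ### Mehler's formula -/

lemma measurePreserving_rotation_gauss (k : ℕ) (θ : ℝ) :
    MeasurePreserving (fun z : (Fin k → ℝ) × (Fin k → ℝ) => cos θ • z.1 + sin θ • z.2)
      ((gaussMeasure k).prod (gaussMeasure k)) (gaussMeasure k) := by
  have hG : IsGaussian (gaussMeasure k) := by
    rw [← isGaussian_map_equiv_iff (PiLp.continuousLinearEquiv 2 ℝ fun _ : Fin k => ℝ).symm]
    have h : (gaussMeasure k).map (PiLp.continuousLinearEquiv 2 ℝ fun _ : Fin k => ℝ).symm =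
        stdGaussian (EuclideanSpace ℝ (Fin k)) := map_pi_eq_stdGaussian
    rw [h]
    infer_instance
  have h0 : ∀ L : StrongDual ℝ (Fin k → ℝ), (gaussMeasure k)[L] = 0 := by
    intro L
    rw [IsGaussian.integral_dual]
    have : ∫ x, x ∂(gaussMeasure k) = 0 := by
      ext i
      rw [eval_integral (fun i => (ExpBdd.coord i).integrable (continuous_apply i)), gaussMeasure,
        integral_eval]
      simp
    rw [this, map_zero]
  have h := IsGaussian.map_rotation_eq_self_of_forall_strongDual_eq_zero h0 θ
  refine ⟨by fun_prop, ?_⟩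
  have h1 := congrArg (Measure.map Prod.fst) h
  rw [Measure.map_map measurable_fst (by fun_prop), Measure.map_fst_prod, measure_univ,
    one_smul] at h1
  exact h1

lemma integral_comp_gauss_rotate {k : ℕ} {f : (Fin k → ℝ) → ℝ} (hf : Continuous f)
    (hb : ExpBdd f) (θ : ℝ) :
    Integrable (fun x => ∫ y, f (cos θ • x + sin θ • y) ∂(gaussMeasure k)) (gaussMeasure k) ∧
    ∫ x, ∫ y, f (cos θ • x + sin θ • y) ∂(gaussMeasure k) ∂(gaussMeasure k) =
      ∫ x, f x ∂(gaussMeasure k) := by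
  have hm := measurePreserving_rotation_gauss k θ
  have hi : Integrable (fun z : (Fin k → ℝ) × (Fin k → ℝ) => f (cos θ • z.1 + sin θ • z.2))
      ((gaussMeasure k).prod (gaussMeasure k)) :=
    hm.integrable_comp_of_integrable (hb.integrable hf)
  refine ⟨hi.integral_prod_left, ?_⟩
  rw [integral_integral hi]
  nth_rw 3 [← hm.map_eq]
  rw [integral_map hm.measurable.aemeasurable (by rw [hm.map_eq]; exact hf.aestronglyMeasurable)]

lemma integral_coord_mul_eval_comp_affine {k : ℕ} (P : MvPolynomial (Fin k) ℝ) (x : Fin k → ℝ)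
    (j : Fin k) {a b : ℝ} (ha : |a| ≤ 1) (hb : |b| ≤ 1) :
    ∫ y, y j * MvPolynomial.eval (a • x + b • y) P ∂(gaussMeasure k) =
      b * ∫ y, MvPolynomial.eval (a • x + b • y) (MvPolynomial.pderiv j P)
        ∂(gaussMeasure k) := by
  have hc : ∀ R : MvPolynomial (Fin k) ℝ,
      Continuous fun y => MvPolynomial.eval (a • x + b • y) R := fun R =>
    (continuous_eval_poly R).comp (by fun_prop)
  rw [← integral_const_mul]
  refine (integral_partialDeriv_gauss j (fun y => ?_) (hc P) ((hc _).const_mul b)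
    ((ExpBdd.eval P).comp_affine x ha hb)
    ((ExpBdd.const b).mul ((ExpBdd.eval _).comp_affine x ha hb))).symm
  have h := hasDerivAt_eval_comp P (c := fun s => a • x + b • Function.update y j s)
    (c' := Pi.single j b) (t := y j) fun i => by
      rcases eq_or_ne i j with rfl | h
      · simpa using ((hasDerivAt_id' (y i)).const_mul b).const_add (a * x i)
      · simpa [h] using hasDerivAt_const (y j) (a * x i + b * y i)
  refine h.congr_deriv ?_
  simp [Pi.single_apply, mul_comm]

lemma hasDerivAt_integral_eval_rotate {k : ℕ} (P : MvPolynomial (Fin k) ℝ) (x : Fin k → ℝ)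
    (θ : ℝ) :
    HasDerivAt (fun s => ∫ y, MvPolynomial.eval (cos s • x + sin s • y) P ∂(gaussMeasure k))
      (∫ y, ∑ j, MvPolynomial.eval (cos θ • x + sin θ • y) (MvPolynomial.pderiv j P) *
        (-sin θ * x j + cos θ * y j) ∂(gaussMeasure k)) θ := by
  have hc : ∀ (s : ℝ) (R : MvPolynomial (Fin k) ℝ),
      Continuous fun y => MvPolynomial.eval (cos s • x + sin s • y) R := fun s R =>
    (continuous_eval_poly R).comp (by fun_prop)
  choose B hBc hBb hB using fun j : Fin k =>
    (ExpBdd.eval (MvPolynomial.pderiv j P)).exists_uniform_affine_bound x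
  have hb1 : ∀ j : Fin k, ExpBdd fun y : Fin k → ℝ => |x j| + |y j| := fun j =>
    (ExpBdd.const |x j|).add ((ExpBdd.coord j).mono fun y => by rw [abs_abs])
  refine (hasDerivAt_integral_of_dominated_loc_of_deriv_le (μ := gaussMeasure k)
    (F := fun s y => MvPolynomial.eval (cos s • x + sin s • y) P)
    (F' := fun s y => ∑ j, MvPolynomial.eval (cos s • x + sin s • y) (MvPolynomial.pderiv j P) *
        (-sin s * x j + cos s * y j))
    (bound := fun y => ∑ j, B j y * (|x j| + |y j|)) (s := Set.univ) Filter.univ_mem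
    (Filter.Eventually.of_forall fun s => (hc s P).aestronglyMeasurable) ?_ ?_
    (ae_of_all _ fun y s _ => ?_) ?_ (ae_of_all _ fun y s _ => ?_)).2
  · exact ((ExpBdd.eval P).comp_affine x (abs_cos_le_one θ) (abs_sin_le_one θ)).integrable (hc θ P)
  · exact (continuous_finsetSum _ fun j _ =>
      (hc θ _).mul (by fun_prop)).aestronglyMeasurable
  · refine (norm_sum_le _ _).trans (Finset.sum_le_sum fun j _ => ?_)
    rw [norm_mul]
    refine mul_le_mul (hB j _ _ (abs_cos_le_one s) (abs_sin_le_one s) y) ?_ (norm_nonneg _)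
      ((abs_nonneg _).trans (hB j _ _ (abs_cos_le_one s) (abs_sin_le_one s) y))
    refine (abs_add_le _ _).trans ?_
    rw [abs_mul, abs_mul, abs_neg]
    exact add_le_add (mul_le_of_le_one_left (abs_nonneg _) (abs_sin_le_one s))
      (mul_le_of_le_one_left (abs_nonneg _) (abs_cos_le_one s))
  · exact (ExpBdd.sum _ fun j _ => (hBb j).mul (hb1 j)).integrable
      (continuous_finsetSum _ fun j _ => (hBc j).mul (by fun_prop))
  · refine hasDerivAt_eval_comp P (c := fun s => cos s • x + sin s • y)
      (c' := fun j => -sin s * x j + cos s * y j) fun j => ?_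
    simpa using ((hasDerivAt_cos s).mul_const (x j)).fun_add ((hasDerivAt_sin s).mul_const (y j))

/-- Mehler's formula for eigenfunctions of the Ornstein-Uhlenbeck operator. -/
lemma integral_eval_rotate_of_eigen {k : ℕ} {P : MvPolynomial (Fin k) ℝ} {l : ℝ}
    (hP : ouOp P = (-l) • P) (x : Fin k → ℝ) {θ : ℝ} (h0 : 0 ≤ θ) (h1 : θ < π / 2) :
    ∫ y, MvPolynomial.eval (cos θ • x + sin θ • y) P ∂(gaussMeasure k) =
      cos θ ^ l * MvPolynomial.eval x P := by
  set I : ℝ → ℝ := fun s =>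
    ∫ y, MvPolynomial.eval (cos s • x + sin s • y) P ∂(gaussMeasure k) with hI
  have hint : ∀ (s : ℝ) (R : MvPolynomial (Fin k) ℝ), Integrable
      (fun y => MvPolynomial.eval (cos s • x + sin s • y) R) (gaussMeasure k) := fun s R =>
    ((ExpBdd.eval R).comp_affine x (abs_cos_le_one s) (abs_sin_le_one s)).integrable
      ((continuous_eval_poly R).comp (by fun_prop))
  have hinty : ∀ (s : ℝ) (j : Fin k) (R : MvPolynomial (Fin k) ℝ), Integrable
      (fun y => y j * MvPolynomial.eval (cos s • x + sin s • y) R) (gaussMeasure k) :=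
    fun s j R => ((ExpBdd.coord j).mul
      ((ExpBdd.eval R).comp_affine x (abs_cos_le_one s) (abs_sin_le_one s))).integrable
      ((continuous_apply j).mul ((continuous_eval_poly R).comp (by fun_prop)))
  have hode : ∀ s, cos s * (∫ y, ∑ j, MvPolynomial.eval (cos s • x + sin s • y)
      (MvPolynomial.pderiv j P) * (-sin s * x j + cos s * y j) ∂(gaussMeasure k)) =
      -l * sin s * I s := by
    intro s
    have hL : -l * I s = ∫ y, MvPolynomial.eval (cos s • x + sin s • y) (ouOp P)
        ∂(gaussMeasure k) := by
      rw [hP]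
      simp only [MvPolynomial.smul_eval]
      rw [integral_const_mul]
    have hL2 : ∀ y : Fin k → ℝ, MvPolynomial.eval (cos s • x + sin s • y) (ouOp P) =
        ∑ j, (MvPolynomial.eval (cos s • x + sin s • y)
            (MvPolynomial.pderiv j (MvPolynomial.pderiv j P)) -
          (cos s * x j) * MvPolynomial.eval (cos s • x + sin s • y) (MvPolynomial.pderiv j P) -
          sin s * (y j *
            MvPolynomial.eval (cos s • x + sin s • y) (MvPolynomial.pderiv j P))) := by
      intro y
      rw [ouOp_apply, map_sum]
      refine Finset.sum_congr rfl fun j _ => ?_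
      simp
      ring
    have hD : ∀ y : Fin k → ℝ, ∑ j, MvPolynomial.eval (cos s • x + sin s • y)
        (MvPolynomial.pderiv j P) * (-sin s * x j + cos s * y j) =
        ∑ j, ((-sin s * x j) *
            MvPolynomial.eval (cos s • x + sin s • y) (MvPolynomial.pderiv j P) +
          cos s * (y j *
            MvPolynomial.eval (cos s • x + sin s • y) (MvPolynomial.pderiv j P))) := fun y =>
      Finset.sum_congr rfl fun j _ => by ring
    rw [show -l * sin s * I s = sin s * (-l * I s) by ring, hL]
    simp only [hL2, hD]
    have hsub : ∀ j, Integrable (fun y => MvPolynomial.eval (cos s • x + sin s • y)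
          (MvPolynomial.pderiv j (MvPolynomial.pderiv j P)) -
        (cos s * x j) * MvPolynomial.eval (cos s • x + sin s • y) (MvPolynomial.pderiv j P))
        (gaussMeasure k) := fun j => (hint s _).sub ((hint s _).const_mul _)
    rw [integral_finsetSum, integral_finsetSum, Finset.mul_sum, Finset.mul_sum]
    · refine Finset.sum_congr rfl fun j _ => ?_
      rw [integral_add ((hint s _).const_mul _) ((hinty s j _).const_mul _),
        integral_sub (hsub j) ((hinty s j _).const_mul _),
        integral_sub (hint s _) ((hint s _).const_mul _), integral_const_mul, integral_const_mul,
        integral_const_mul, integral_const_mul]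
      have h := integral_coord_mul_eval_comp_affine (MvPolynomial.pderiv j P) x j
        (abs_cos_le_one s) (abs_sin_le_one s)
      set J := ∫ y, y j * MvPolynomial.eval (cos s • x + sin s • y) (MvPolynomial.pderiv j P)
        ∂(gaussMeasure k)
      rw [mul_sub, mul_sub, ← h]
      linear_combination J * cos_sq_add_sin_sq s
    · exact fun j _ => (hsub j).sub ((hinty s j _).const_mul _)
    · exact fun j _ => ((hint s _).const_mul _).add ((hinty s j _).const_mul _)
  have hpos : ∀ s ∈ Set.Icc 0 θ, 0 < cos s := fun s hs =>
    cos_pos_of_mem_Ioo ⟨by linarith [hs.1, pi_pos], by linarith [hs.2]⟩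
  have hder : ∀ s ∈ Set.Icc 0 θ, HasDerivAt (fun s => I s * cos s ^ (-l)) 0 s := by
    intro s hs
    have hcs := hpos s hs
    refine ((hasDerivAt_integral_eval_rotate P x s).fun_mul
      ((hasDerivAt_cos s).rpow_const (p := -l) (Or.inl hcs.ne'))).congr_deriv ?_
    have h2 : cos s ^ (-l) = cos s * cos s ^ (-l - 1) := by
      rw [rpow_sub_one hcs.ne']
      field_simp
    rw [h2]
    linear_combination cos s ^ (-l - 1) * hode s
  have hconst := constant_of_has_deriv_right_zero
    (fun s hs => (hder s hs).continuousAt.continuousWithinAt)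
    (fun s hs => (hder s (Set.Ico_subset_Icc_self hs)).hasDerivWithinAt) θ ⟨h0, le_rfl⟩
  have hcθ := hpos θ ⟨h0, le_rfl⟩
  have hI0 : I 0 = MvPolynomial.eval x P := by simp [hI]
  rw [hI0, cos_zero, one_rpow, mul_one] at hconst
  rw [← hconst, mul_left_comm, ← rpow_add hcθ, add_neg_cancel, rpow_zero, mul_one]

/-! ### Gradient bound and the main theorem -/

lemma integral_exp_linear_gauss {k : ℕ} (u : Fin k → ℝ) :
    ∫ y, exp (∑ j, u j * y j) ∂(gaussMeasure k) = exp ((∑ j, u j ^ 2) / 2) := by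
  simp only [exp_sum]
  rw [gaussMeasure, integral_fintype_prod_eq_prod (f := fun j s => exp (u j * s)),
    Finset.sum_div, exp_sum]
  refine Finset.prod_congr rfl fun j _ => ?_
  have h := congrFun (mgf_id_gaussianReal (μ := 0) (v := 1)) (u j)
  simpa [mgf] using h

lemma abs_rpow_le_factorial_mul_exp {q : ℝ} (hq : 0 ≤ q) (s : ℝ) :
    |s| ^ q ≤ (⌈q⌉₊.factorial : ℝ) * (exp s + exp (-s)) := by
  have hf : (1 : ℝ) ≤ ⌈q⌉₊.factorial := by exact_mod_cast Nat.factorial_pos ⌈q⌉₊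
  have h1 : exp |s| ≤ exp s + exp (-s) := by
    rcases abs_cases s with ⟨h, _⟩ | ⟨h, _⟩ <;> rw [h] <;> linarith [exp_pos s, exp_pos (-s)]
  refine le_trans ?_ (mul_le_mul_of_nonneg_left h1 (by positivity))
  rcases le_total |s| 1 with h | h
  · exact (rpow_le_one (abs_nonneg s) h hq).trans
      (one_le_mul_of_one_le_of_one_le hf (one_le_exp (abs_nonneg s)))
  · refine (rpow_le_rpow_of_exponent_le h (Nat.le_ceil q)).trans ?_
    rw [rpow_natCast, mul_comm, ← div_le_iff₀ (by positivity)]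
    exact pow_div_factorial_le_exp _ (abs_nonneg s) _

lemma exists_integral_abs_linear_rpow_le {q : ℝ} (hq : 0 < q) :
    ∃ K : ℝ, 0 < K ∧ ∀ (k : ℕ) (u : Fin k → ℝ),
      ∫ y, |∑ j, u j * y j| ^ q ∂(gaussMeasure k) ≤ K * √(∑ j, u j ^ 2) ^ q := by
  refine ⟨(⌈q⌉₊.factorial : ℝ) * (exp (1 / 2) + exp (1 / 2)), by positivity, fun k u => ?_⟩
  set r := √(∑ j, u j ^ 2) with hr
  have hr2 : r ^ 2 = ∑ j, u j ^ 2 := sq_sqrt (by positivity)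
  rcases (sqrt_nonneg (∑ j, u j ^ 2)).eq_or_lt with h0 | h0
  · have hu : ∀ j, u j = 0 := by
      rw [← hr] at h0
      rw [← h0, zero_pow two_ne_zero, eq_comm,
        Finset.sum_eq_zero_iff_of_nonneg fun j _ => sq_nonneg _] at hr2
      exact fun j => by simpa using hr2 j (Finset.mem_univ j)
    simp only [hu, zero_mul, Finset.sum_const_zero, abs_zero, zero_rpow hq.ne', integral_zero]
    positivity
  rw [← hr] at h0
  have hunit : ∀ ε : ℝ, ε ^ 2 = 1 → ∑ j, (ε * (u j / r)) ^ 2 = 1 := by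
    intro ε hε
    simp only [mul_pow, hε, one_mul, div_pow]
    rw [← Finset.sum_div, ← hr2, div_self (by positivity)]
  have hexp : ∀ ε : ℝ, ε ^ 2 = 1 →
      Integrable (fun y : Fin k → ℝ => exp (∑ j, (ε * (u j / r)) * y j)) (gaussMeasure k) ∧
      ∫ y, exp (∑ j, (ε * (u j / r)) * y j) ∂(gaussMeasure k) = exp (1 / 2) := by
    intro ε hε
    have h := integral_exp_linear_gauss fun j => ε * (u j / r)
    rw [hunit ε hε] at h
    refine ⟨?_, h⟩
    by_contra hn
    rw [integral_undef hn] at h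
    exact (exp_pos _).ne h
  have h1 := hexp 1 (by norm_num)
  have h2 := hexp (-1) (by norm_num)
  have hpt : ∀ y : Fin k → ℝ, |∑ j, u j * y j| ^ q ≤ r ^ q * ((⌈q⌉₊.factorial : ℝ) *
      (exp (∑ j, (1 * (u j / r)) * y j) + exp (∑ j, (-1 * (u j / r)) * y j))) := by
    intro y
    have e1 : ∑ j, u j * y j = r * ∑ j, (1 * (u j / r)) * y j := by
      rw [Finset.mul_sum]
      exact Finset.sum_congr rfl fun j _ => by field_simp
    have e2 : ∑ j, (-1 * (u j / r)) * y j = -∑ j, (1 * (u j / r)) * y j := by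
      rw [← Finset.sum_neg_distrib]
      exact Finset.sum_congr rfl fun j _ => by ring
    rw [e1, e2, abs_mul, abs_of_pos h0, mul_rpow h0.le (abs_nonneg _)]
    gcongr
    exact abs_rpow_le_factorial_mul_exp hq.le _
  have hi := ((h1.1.add h2.1).const_mul (⌈q⌉₊.factorial : ℝ)).const_mul (r ^ q)
  refine (integral_mono_of_nonneg (ae_of_all _ fun y => by positivity) hi
    (ae_of_all _ hpt)).trans_eq ?_
  simp only [Pi.add_apply]
  rw [integral_const_mul, integral_const_mul, integral_add h1.1 h2.1, h1.2, h2.2]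
  ring

/-- Integral representation of the gradient through the backward Ornstein-Uhlenbeck flow. -/
lemma sin_mul_pderiv_eq_cos_mul_integral {k N : ℕ} {F : ℕ → MvPolynomial (Fin k) ℝ}
    (hF : ∀ n, ouOp (F n) = (-(n : ℝ)) • F n) {t θ : ℝ} (h0 : 0 ≤ θ) (h1 : θ < π / 2)
    (hθ : cos θ = exp (-t)) (x : Fin k → ℝ) (j : Fin k) :
    sin θ * MvPolynomial.eval x (MvPolynomial.pderiv j (∑ n ∈ Finset.range N, F n)) =
      cos θ * ∫ y, y j * MvPolynomial.eval (cos θ • x + sin θ • y)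
        (∑ n ∈ Finset.range N, exp (n * t) • F n) ∂(gaussMeasure k) := by
  have hc : 0 < cos θ := hθ ▸ exp_pos _
  have heig : ∀ n, ouOp (MvPolynomial.pderiv j (F n)) =
      (-((n : ℝ) - 1)) • MvPolynomial.pderiv j (F n) := by
    intro n
    rw [ouOp_pderiv, hF, Derivation.map_smul, neg_sub, sub_smul, one_smul, neg_smul]
    abel
  have hint : ∀ n : ℕ, Integrable (fun y => exp (n * t) *
      MvPolynomial.eval (cos θ • x + sin θ • y) (MvPolynomial.pderiv j (F n)))
      (gaussMeasure k) := fun n =>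
    (((ExpBdd.eval _).comp_affine x (abs_cos_le_one θ) (abs_sin_le_one θ)).integrable
      ((continuous_eval_poly _).comp (by fun_prop))).const_mul _
  rw [integral_coord_mul_eval_comp_affine _ x j (abs_cos_le_one θ) (abs_sin_le_one θ),
    mul_left_comm]
  congr 1
  simp only [map_sum, Derivation.map_smul, MvPolynomial.smul_eval]
  rw [integral_finsetSum _ fun n _ => hint n, Finset.mul_sum]
  refine Finset.sum_congr rfl fun n _ => ?_
  rw [integral_const_mul, integral_eval_rotate_of_eigen (heig n) x h0 h1, rpow_sub_one hc.ne',
    rpow_natCast]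
  have h2 : exp (n * t) * cos θ ^ n = 1 := by
    rw [hθ, ← exp_nat_mul, ← exp_add]
    simp
  field_simp
  linear_combination (-MvPolynomial.eval x (MvPolynomial.pderiv j (F n))) * h2

lemma gradNorm_nonneg {k : ℕ} (P : MvPolynomial (Fin k) ℝ) (x : Fin k → ℝ) :
    0 ≤ gradNorm P x := sqrt_nonneg _

lemma exists_lpNormGauss_gradNorm_le {p : ℝ} (hp : 1 < p) :
    ∃ K : ℝ, 0 < K ∧ ∀ (k N : ℕ) (F : ℕ → MvPolynomial (Fin k) ℝ),
      (∀ n, ouOp (F n) = (-(n : ℝ)) • F n) → ∀ t : ℝ, 0 < t →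
      lpNormGauss p (gradNorm (∑ n ∈ Finset.range N, F n)) ≤ K * t ^ (-(1 / 2) : ℝ) *
        (∫ x, |∑ n ∈ Finset.range N, exp (n * t) * MvPolynomial.eval x (F n)| ^ p
          ∂(gaussMeasure k)) ^ (1 / p) := by
  have hp0 : 0 < p := by linarith
  set q := p.conjExponent with hq
  have hpq : p.HolderConjugate q := Real.HolderConjugate.conjExponent hp
  have hq0 : 0 < q := hpq.symm.pos
  obtain ⟨K, hK, hmom⟩ := exists_integral_abs_linear_rpow_le hq0
  refine ⟨K ^ (1 / q), by positivity, fun k N F hF t ht => ?_⟩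
  set P := ∑ n ∈ Finset.range N, F n with hP
  set Q := ∑ n ∈ Finset.range N, exp (n * t) • F n with hQ
  have hQe : ∀ x, ∑ n ∈ Finset.range N, exp (n * t) * MvPolynomial.eval x (F n) =
      MvPolynomial.eval x Q := fun x => by simp [hQ, MvPolynomial.smul_eval]
  simp only [hQe]
  have het : exp (-t) < 1 := exp_lt_one_iff.mpr (by linarith)
  set θ := arccos (exp (-t)) with hθd
  have hcos : cos θ = exp (-t) := cos_arccos (by linarith [exp_pos (-t)]) het.le
  have hθ0 : 0 < θ := arccos_pos.mpr het
  have hθ1 : θ < π / 2 := arccos_lt_pi_div_two.mpr (exp_pos _)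
  have hsin : 0 < sin θ := sin_pos_of_pos_of_lt_pi hθ0 (by linarith [pi_pos])
  have hcs : cos θ ≤ t ^ (-(1 / 2) : ℝ) * sin θ := by
    have h1 : t ^ (-(1 / 2) : ℝ) = (√t)⁻¹ := by rw [rpow_neg ht.le, sqrt_eq_rpow]
    have h2 : 0 < √t := sqrt_pos.mpr ht
    rw [h1, inv_mul_eq_div, le_div_iff₀ h2]
    refine le_of_sq_le_sq ?_ hsin.le
    rw [mul_pow, sq_sqrt ht.le, sin_sq, hcos, ← exp_nat_mul]
    have h3 := add_one_le_exp (2 * t)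
    have h4 : exp (((2 : ℕ) : ℝ) * -t) * exp (2 * t) = 1 := by
      rw [← exp_add]
      simp
    have h5 := exp_pos (((2 : ℕ) : ℝ) * -t)
    nlinarith [mul_le_mul_of_nonneg_left h3 h5.le, mul_pos h5 ht]
  set S : (Fin k → ℝ) → ℝ := fun x =>
    ∫ y, |MvPolynomial.eval (cos θ • x + sin θ • y) Q| ^ p ∂(gaussMeasure k) with hS
  have hS0 : ∀ x, 0 ≤ S x := fun x => integral_nonneg fun y => by positivity
  have hpt : ∀ x, gradNorm P x ≤ t ^ (-(1 / 2) : ℝ) * K ^ (1 / q) * S x ^ (1 / p) := by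
    intro x
    set G := gradNorm P x with hG
    have hG0 : 0 ≤ G := gradNorm_nonneg P x
    set u : Fin k → ℝ := fun j => MvPolynomial.eval x (MvPolynomial.pderiv j P) with hu
    have hG2 : G ^ 2 = ∑ j, u j ^ 2 := sq_sqrt (by positivity)
    have hQc : Continuous fun y => MvPolynomial.eval (cos θ • x + sin θ • y) Q :=
      (continuous_eval_poly Q).comp (by fun_prop)
    have hQb : ExpBdd fun y => MvPolynomial.eval (cos θ • x + sin θ • y) Q :=
      (ExpBdd.eval Q).comp_affine x (abs_cos_le_one θ) (abs_sin_le_one θ)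
    have hlc : Continuous fun y : Fin k → ℝ => ∑ j, u j * y j := by fun_prop
    have hlb : ExpBdd fun y : Fin k → ℝ => ∑ j, u j * y j :=
      ExpBdd.sum _ fun j _ => (ExpBdd.const _).mul (ExpBdd.coord j)
    have hrep : sin θ * G ^ 2 = cos θ * ∫ y, (∑ j, u j * y j) *
        MvPolynomial.eval (cos θ • x + sin θ • y) Q ∂(gaussMeasure k) := by
      simp only [Finset.sum_mul, mul_assoc]
      rw [integral_finsetSum _ fun j _ => (((ExpBdd.coord j).mul hQb).integrable
        ((continuous_apply j).mul hQc)).const_mul _, hG2, Finset.mul_sum, Finset.mul_sum]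
      refine Finset.sum_congr rfl fun j _ => ?_
      have h := sin_mul_pderiv_eq_cos_mul_integral (N := N) hF hθ0.le hθ1 hcos x j
      rw [integral_const_mul]
      linear_combination u j * h
    have hhol : ∫ y, (∑ j, u j * y j) * MvPolynomial.eval (cos θ • x + sin θ • y) Q
        ∂(gaussMeasure k) ≤ (K ^ (1 / q) * G) * S x ^ (1 / p) := by
      have h1 : ∫ y, (∑ j, u j * y j) * MvPolynomial.eval (cos θ • x + sin θ • y) Q
          ∂(gaussMeasure k) ≤ ∫ y, |∑ j, u j * y j| *
            |MvPolynomial.eval (cos θ • x + sin θ • y) Q| ∂(gaussMeasure k) := by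
        refine (le_abs_self _).trans ((abs_integral_le_integral_abs).trans_eq ?_)
        simp only [abs_mul]
      refine h1.trans ((integral_mul_le_Lp_mul_Lq_of_nonneg hpq.symm
        (ae_of_all _ fun y => abs_nonneg _) (ae_of_all _ fun y => abs_nonneg _)
        ((hlb.memLp hlc hq0).abs) ((hQb.memLp hQc hp0).abs)).trans ?_)
      refine mul_le_mul_of_nonneg_right ?_ (rpow_nonneg (hS0 x) _)
      refine (rpow_le_rpow (integral_nonneg fun y => by positivity) (hmom k u)
        (by positivity)).trans_eq ?_
      rw [mul_rpow hK.le (by positivity), ← rpow_mul (sqrt_nonneg _), mul_one_div_cancel hq0.ne',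
        rpow_one]
      rfl
    rcases hG0.eq_or_lt with h0 | h0
    · rw [← h0]
      exact mul_nonneg (by positivity) (rpow_nonneg (hS0 x) _)
    · refine le_of_mul_le_mul_right ?_ (mul_pos hsin h0)
      have h3 : 0 ≤ (K ^ (1 / q) * G) * S x ^ (1 / p) :=
        mul_nonneg (by positivity) (rpow_nonneg (hS0 x) _)
      calc G * (sin θ * G) = sin θ * G ^ 2 := by ring
        _ ≤ cos θ * ((K ^ (1 / q) * G) * S x ^ (1 / p)) := by
            rw [hrep]
            exact mul_le_mul_of_nonneg_left hhol (hcos ▸ (exp_pos _).le)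
        _ ≤ (t ^ (-(1 / 2) : ℝ) * sin θ) * ((K ^ (1 / q) * G) * S x ^ (1 / p)) :=
            mul_le_mul_of_nonneg_right hcs h3
        _ = _ := by ring
  have hQp : ExpBdd fun x => |MvPolynomial.eval x Q| ^ p := (ExpBdd.eval Q).abs_rpow hp0.le
  have hQpc : Continuous fun x => |MvPolynomial.eval x Q| ^ p :=
    (continuous_eval_poly Q).abs.rpow_const fun _ => Or.inr hp0.le
  obtain ⟨hSi, hSint⟩ := integral_comp_gauss_rotate hQpc hQp θ
  set D := t ^ (-(1 / 2) : ℝ) * K ^ (1 / q) with hD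
  have hD0 : 0 ≤ D := by positivity
  have hfin : ∫ x, |gradNorm P x| ^ p ∂(gaussMeasure k) ≤
      D ^ p * ∫ x, |MvPolynomial.eval x Q| ^ p ∂(gaussMeasure k) := by
    rw [← hSint, ← integral_const_mul]
    refine integral_mono_of_nonneg (ae_of_all _ fun x => by positivity) (hSi.const_mul _)
      (ae_of_all _ fun x => ?_)
    beta_reduce
    rw [abs_of_nonneg (gradNorm_nonneg P x)]
    refine (rpow_le_rpow (gradNorm_nonneg P x) (hpt x) hp0.le).trans_eq ?_
    rw [mul_rpow hD0 (rpow_nonneg (hS0 x) _), ← rpow_mul (hS0 x), one_div_mul_cancel hp0.ne',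
      rpow_one]
  unfold lpNormGauss
  refine (rpow_le_rpow (integral_nonneg fun x => by positivity) hfin (by positivity)).trans_eq ?_
  rw [mul_rpow (by positivity) (integral_nonneg fun x => by positivity), ← rpow_mul hD0,
    mul_one_div_cancel hp0.ne', rpow_one, hD]
  ring

/-- Dimension independent Bernstein–Markov inequality in Gauss space. -/
theorem bernstein_markov_gauss (p : ℝ) (hp : 1 < p) :
    ∃ C : ℝ, 0 < C ∧ ∀ k : ℕ, 1 ≤ k → ∀ P : MvPolynomial (Fin k) ℝ,
      lpNormGauss p (gradNorm P) ≤
        C * (P.totalDegree : ℝ) ^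
            ((1 : ℝ) / 2 + (1 / π) * Real.arctan (|p - 2| / (2 * Real.sqrt (p - 1)))) *
          lpNormGauss p (fun x => MvPolynomial.eval x P) := by
  obtain ⟨K, hK, hgrad⟩ := exists_lpNormGauss_gradNorm_le hp
  set κ := |p - 2| / (2 * √(p - 1)) with hκ
  refine ⟨K * exp (2 * (1 + κ * π)), by positivity, fun k _ P => ?_⟩
  rcases Nat.eq_zero_or_pos P.totalDegree with hd | hd
  · have hg : ∀ x, gradNorm P x = 0 := by
      intro x
      rw [MvPolynomial.totalDegree_eq_zero_iff_eq_C.mp hd]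
      simp [gradNorm]
    have hl : lpNormGauss p (gradNorm P) = 0 := by
      have hp1 : p ≠ 0 := by linarith
      simp [lpNormGauss, hg, zero_rpow hp1, hp1]
    rw [hl]
    refine mul_nonneg (by positivity) (rpow_nonneg (integral_nonneg fun x => by positivity) _)
  · obtain ⟨F, hF, hsum⟩ := exists_eigen_decomposition P
    set d := P.totalDegree with hdd
    have hd0 : (0 : ℝ) < d := by exact_mod_cast hd
    set t := (1 / d : ℝ) ^ (1 + 2 / π * arctan κ) with ht
    have ht0 : 0 < t := by positivity
    have h1 := hgrad k (d + 1) F hF t ht0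
    rw [← hsum] at h1
    have h2 := lpNorm_backward_semigroup_le hF hp hd hκ ht
    have h3 : ∀ x, ∑ n ∈ Finset.range (d + 1), MvPolynomial.eval x (F n) =
        MvPolynomial.eval x P := fun x => by rw [← map_sum, ← hsum]
    simp only [h3] at h2
    have ht' : t ^ (-(1 / 2) : ℝ) = (d : ℝ) ^ (1 / 2 + 1 / π * arctan κ) := by
      rw [ht, one_div, inv_rpow hd0.le, ← rpow_neg hd0.le, ← rpow_mul hd0.le]
      congr 1
      ring
    rw [ht'] at h1
    refine h1.trans ((mul_le_mul_of_nonneg_left h2 (by positivity)).trans_eq ?_)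
    unfold lpNormGauss
    ring
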